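/- arXiv:1501.05629 — 8 statements merged into one kernel-verified Lean document; each statement's English description precedes it below -/
import Mathlib

section
/- Let d be a positive integer and let k be a field of characteristic 0 or of characteristic greater than d. If R is a non-unital associative k-algebra such that the d-fold product x·x⋯x of every element x with itself vanishes, then every product of 2^d − 1 elements of R vanishes, i.e. R^(2^d − 1) = 0. -/
/-!
Embed `R` in the unital algebra `A = Unitization k R` and work with submodules of `A`, which form
an idempotent semiring. For a submodule `S` closed under multiplication and an ideal `J ≤ S` of
`S`, the claim proved by induction on `n` is: if `x ^ n ∈ J` for all `x ∈ S`, then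
`S ^ (2 ^ n - 1) ≤ J`. Keeping `J` arbitrary replaces passing to quotient algebras.

The induction step is Higgins' argument. Since `1, …, n + 1` are invertible in `k`, the
coefficient of `t` in `(x + t y) ^ (n + 1)` can be extracted by inverting a Vandermonde matrix, so
`∑ i ≤ n, x ^ i * y * x ^ (n - i) ∈ J` (`linearized_mem`). Evaluating the double sum
`∑ i, j ≤ n, x ^ i * z * y ^ j * x ^ (n - i) * y ^ (n - j)` in two orders then gives
`x ^ n * z * y ^ n ∈ J` (`higgins_mem`). Hence the ideal `J'` of `S` generated by `J` and all
`n`-th powers satisfies `J' * S * J' ≤ J`. By induction `S ^ N ≤ J'` with `N = 2 ^ n - 1`, so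
`S ^ (2 * N + 1) ≤ J`, and `2 * N + 1 = 2 ^ (n + 1) - 1`.
-/

/-- The product `x * y₁ * y₂ * ⋯ * yₙ` of a nonempty list of elements of a (non-unital)
multiplicative structure, associated to the right. -/
def listProd {R : Type*} [Mul R] : R → List R → R
  | x, [] => x
  | x, y :: l => x * listProd y l

/-- The expansion of `(x + t y) ^ n` in powers of the central parameter `t`, with its constant and
linear coefficients made explicit. -/
lemma exists_pow_expansion {k A : Type*} [Field k] [Ring A] [Algebra k A] (x y : A) (n : ℕ) :
    ∃ c : ℕ → A, c 0 = x ^ n ∧ c 1 = ∑ i ∈ Finset.range n, x ^ i * y * x ^ (n - 1 - i) ∧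
      (∀ i, n < i → c i = 0) ∧
      ∀ t : k, (x + t • y) ^ n = ∑ i ∈ Finset.range (n + 1), t ^ i • c i := by
  induction n with
  | zero =>
    refine ⟨fun i => if i = 0 then 1 else 0, by simp, by simp, ?_, by simp⟩
    intro i hi
    simp [hi.ne']
  | succ n ih =>
    obtain ⟨c, h0, h1, hc, h⟩ := ih
    refine ⟨fun i => c i * x + (if i = 0 then 0 else c (i - 1) * y), ?_, ?_, ?_, ?_⟩
    · simp [h0, pow_succ]
    · simp only [h1, h0, one_ne_zero, if_false, Nat.sub_self, Finset.sum_range_succ,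
        Nat.add_sub_cancel, pow_zero, mul_one, Finset.sum_mul]
      congr 1
      refine Finset.sum_congr rfl fun i hi => ?_
      have hi := Finset.mem_range.1 hi
      rw [mul_assoc, ← pow_succ, show n - 1 - i + 1 = n - i by omega]
    · intro i hi
      simp [hc i (by omega), hc (i - 1) (by omega)]
    · intro t
      rw [pow_succ, h]
      simp only [smul_add, Finset.sum_add_distrib]
      rw [Finset.sum_range_succ _ (n + 1), Finset.sum_range_succ' (fun i => t ^ i • ite _ _ _),
        hc (n + 1) (by omega), mul_add, Finset.sum_mul, Finset.sum_mul]
      simp only [pow_succ, mul_smul, smul_mul_assoc, mul_smul_comm, zero_mul, smul_zero, add_zero,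
        if_true, Nat.succ_ne_zero, if_false, Nat.add_sub_cancel]
      congr 1
      exact Finset.sum_congr rfl fun i _ => smul_comm _ _ _

/-- If all values at `t ∈ k` of a polynomial of degree at most `n` with coefficients in a module
lie in a submodule, so do its coefficients, provided that `1, …, n` are nonzero in `k`. -/
lemma coeff_mem_of_forall_sum_mem {k A : Type*} [Field k] [AddCommGroup A] [Module k A]
    (J : Submodule k A) (n : ℕ) (hk : ∀ m : ℕ, 0 < m → m ≤ n → (m : k) ≠ 0) (c : ℕ → A)
    (h : ∀ t : k, ∑ i ∈ Finset.range (n + 1), t ^ i • c i ∈ J) (m : ℕ) (hm : m ≤ n) :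
    c m ∈ J := by
  let v : Fin (n + 1) → k := fun i => ((i : ℕ) : k)
  have hlt : ∀ a b : Fin (n + 1), a < b → v a ≠ v b := by
    intro a b hab hv
    have hab' : (a : ℕ) < b := hab
    refine hk (b - a) (by omega) (by omega) ?_
    rw [Nat.cast_sub hab'.le, sub_eq_zero]
    exact hv.symm
  have hv : Function.Injective v := by
    intro a b hab
    rcases lt_trichotomy a b with h1 | h1 | h1
    · exact absurd hab (hlt a b h1)
    · exact h1
    · exact absurd hab.symm (hlt b a h1)
  have hdet : IsUnit (Matrix.vandermonde v).det :=
    isUnit_iff_ne_zero.2 (Matrix.det_vandermonde_ne_zero_iff.2 hv)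
  have hinv := Matrix.nonsing_inv_mul _ hdet
  let p : Fin (n + 1) := ⟨m, by omega⟩
  -- Row `m` of the inverse Vandermonde matrix expresses `c m` through the values at `0, …, n`.
  have key : c m = ∑ j, (Matrix.vandermonde v)⁻¹ p j •
      ∑ i ∈ Finset.range (n + 1), v j ^ i • c i := by
    simp only [Finset.sum_range, Finset.smul_sum, smul_smul]
    rw [Finset.sum_comm]
    simp only [← Finset.sum_smul]
    have : ∀ i : Fin (n + 1), ∑ j, (Matrix.vandermonde v)⁻¹ p j * v j ^ (i : ℕ) =
        if p = i then 1 else 0 := by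
      intro i
      rw [← Matrix.one_apply, ← hinv, Matrix.mul_apply]
      rfl
    simp [this, p]
  rw [key]
  exact J.sum_mem fun j _ => J.smul_mem _ (h _)

/-- Linearization of the identity `x ^ (n + 1) ∈ J`. -/
lemma linearized_mem {k A : Type*} [Field k] [Ring A] [Algebra k A] (S J : Submodule k A) (n : ℕ)
    (hk : ∀ m : ℕ, 0 < m → m ≤ n + 1 → (m : k) ≠ 0) (h : ∀ x ∈ S, x ^ (n + 1) ∈ J)
    {x y : A} (hx : x ∈ S) (hy : y ∈ S) :
    ∑ i ∈ Finset.range (n + 1), x ^ i * y * x ^ (n - i) ∈ J := by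
  obtain ⟨c, -, h1, -, hc⟩ := exists_pow_expansion (k := k) x y (n + 1)
  have := coeff_mem_of_forall_sum_mem J (n + 1) hk c
    (fun t => hc t ▸ h _ (S.add_mem hx (S.smul_mem t hy))) 1 (by omega)
  simpa [h1] using this

/-- Higgins' identity, obtained by summing
`x ^ i * z * y ^ j * x ^ (n - i) * y ^ (n - j)` over `i, j ≤ n` in both orders. -/
lemma higgins_mem {k A : Type*} [Field k] [Ring A] [Algebra k A] (S J : Submodule k A) (n : ℕ)
    (hS : S * S ≤ S) (hSJ : S * J ≤ J) (hJS : J * S ≤ J)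
    (hk : ∀ m : ℕ, 0 < m → m ≤ n + 1 → (m : k) ≠ 0) (h : ∀ x ∈ S, x ^ (n + 1) ∈ J)
    {x y z : A} (hx : x ∈ S) (hy : y ∈ S) (hz : z ∈ S) :
    x ^ n * z * y ^ n ∈ J := by
  have lin := fun {x y : A} => linearized_mem (x := x) (y := y) S J n hk h
  have hpow : ∀ {w : A}, w ∈ S → ∀ i, w ^ (i + 1) ∈ S := by
    intro w hw i
    induction i with
    | zero => simpa using hw
    | succ i ih => rw [pow_succ]; exact hS (Submodule.mul_mem_mul ih hw)
  have hSpow : ∀ {w : A}, w ∈ S → ∀ {a : A}, a ∈ S → ∀ i, a * w ^ i ∈ S := by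
    intro w hw a ha i
    rcases i with _ | i
    · simpa using ha
    · exact hS (Submodule.mul_mem_mul ha (hpow hw i))
  have hJpow : ∀ {w : A}, w ∈ S → ∀ {a : A}, a ∈ J → ∀ i, a * w ^ i ∈ J := by
    intro w hw a ha i
    rcases i with _ | i
    · simpa using ha
    · exact hJS (Submodule.mul_mem_mul ha (hpow hw i))
  have hpowJ : ∀ {w : A}, w ∈ S → ∀ {a : A}, a ∈ J → ∀ i, w ^ i * a ∈ J := by
    intro w hw a ha i
    rcases i with _ | i
    · simpa using ha
    · exact hSJ (Submodule.mul_mem_mul (hpow hw i) ha)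
  let T : A := ∑ i ∈ Finset.range (n + 1), ∑ j ∈ Finset.range (n + 1),
    x ^ i * z * y ^ j * x ^ (n - i) * y ^ (n - j)
  have hT : T ∈ J := by
    have : T = ∑ j ∈ Finset.range (n + 1),
        (∑ i ∈ Finset.range (n + 1), x ^ i * (z * y ^ j) * x ^ (n - i)) * y ^ (n - j) := by
      simp only [T, Finset.sum_mul, mul_assoc]
      exact Finset.sum_comm
    rw [this]
    exact J.sum_mem fun j _ => hJpow hy (lin hx (hSpow hy hz j)) _
  have hT' : T = ∑ i ∈ Finset.range (n + 1),
      x ^ i * (z * ∑ j ∈ Finset.range (n + 1), y ^ j * x ^ (n - i) * y ^ (n - j)) := by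
    simp only [T, Finset.mul_sum, mul_assoc]
  rw [hT', Finset.sum_range_succ] at hT
  have hrest : ∑ i ∈ Finset.range n,
      x ^ i * (z * ∑ j ∈ Finset.range (n + 1), y ^ j * x ^ (n - i) * y ^ (n - j)) ∈ J := by
    refine J.sum_mem fun i hi => hpowJ hx (hSJ (Submodule.mul_mem_mul hz (lin hy ?_))) i
    have hi := Finset.mem_range.1 hi
    rw [show n - i = (n - i - 1) + 1 by omega]
    exact hpow hx _
  have hlast := (J.add_mem_iff_right hrest).1 hT
  -- For `i = n` the inner sum is `∑ j ≤ n, y ^ j * y ^ (n - j) = (n + 1) • y ^ n`.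
  have hsum : ∑ j ∈ Finset.range (n + 1), y ^ j * x ^ (n - n) * y ^ (n - j) =
      ((n + 1 : ℕ) : k) • y ^ n := by
    rw [Finset.sum_congr rfl (g := fun _ => y ^ n)]
    · simp only [Finset.sum_const, Finset.card_range, Nat.cast_smul_eq_nsmul]
    · intro j hj
      have hj := Finset.mem_range.1 hj
      rw [Nat.sub_self, pow_zero, mul_one, ← pow_add, show j + (n - j) = n by omega]
  rw [hsum, mul_smul_comm, mul_smul_comm, ← mul_assoc] at hlast
  exact (J.smul_mem_iff (hk (n + 1) (by omega) le_rfl)).1 hlast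

/-- The Nagata–Higman theorem relative to an ideal `J` of a non-unital subalgebra `S` of a unital
algebra. -/
lemma pow_le_of_forall_pow_mem {k A : Type*} [Field k] [Ring A] [Algebra k A]
    (S : Submodule k A) (hS : S * S ≤ S) (n : ℕ) :
    ∀ J : Submodule k A, J ≤ S → S * J ≤ J → J * S ≤ J →
      (∀ m : ℕ, 0 < m → m ≤ n + 1 → (m : k) ≠ 0) → (∀ x ∈ S, x ^ (n + 1) ∈ J) →
      S ^ (2 ^ (n + 1) - 1) ≤ J := by
  induction n with
  | zero =>
    intro J _ _ _ _ h x hx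
    simpa using h x (by simpa using hx)
  | succ n ih =>
    intro J hJ hSJ hJS hk h
    let E : Submodule k A := 1 ⊔ S
    let K : Submodule k A := Submodule.span k {w | ∃ x ∈ S, w = x ^ (n + 1)}
    have hSE : S * E ≤ S := by
      simp only [E, Submodule.mul_sup, mul_one]; exact sup_le le_rfl hS
    have hES : E * S ≤ S := by
      simp only [E, Submodule.sup_mul, one_mul]; exact sup_le le_rfl hS
    have hJE : J * E ≤ J := by
      simp only [E, Submodule.mul_sup, mul_one]; exact sup_le le_rfl hJS
    have hEJ : E * J ≤ J := by
      simp only [E, Submodule.sup_mul, one_mul]; exact sup_le le_rfl hSJ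
    have hKS : K ≤ S := by
      refine Submodule.span_le.2 ?_
      rintro _ ⟨x, hx, rfl⟩
      change x ^ (n + 1) ∈ S
      clear * - hS hx
      induction n with
      | zero => simpa using hx
      | succ i ih => rw [pow_succ]; exact hS (Submodule.mul_mem_mul ih hx)
    have hKSK : K * S * K ≤ J := by
      have : K * S * K ≤ Submodule.span k (J : Set A) := by
        rw [← Submodule.span_eq S, Submodule.span_mul_span, Submodule.span_mul_span]
        refine Submodule.span_mono ?_
        rintro _ ⟨_, ⟨_, ⟨x, hx, rfl⟩, z, hz, rfl⟩, _, ⟨y, hy, rfl⟩, rfl⟩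
        exact higgins_mem S J (n + 1) hS hSJ hJS hk h (by simpa using hx) (by simpa using hy) hz
      rwa [Submodule.span_eq] at this
    have hKE : E * K * E ≤ S :=
      (mul_le_mul' ((mul_le_mul' le_rfl hKS).trans hES) le_rfl).trans hSE
    have hSleE : S ≤ E := le_sup_right
    have h1E : (1 : Submodule k A) ≤ E := le_sup_left
    -- The ideal of `S` generated by `J` and all `(n + 1)`-st powers.
    let J' : Submodule k A := J ⊔ E * K * E
    have hJ'S : J' ≤ S := sup_le hJ hKE
    have hind : S ^ (2 ^ (n + 1) - 1) ≤ J' := by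
      refine ih J' hJ'S ?_ ?_ (fun m h0 hm => hk m h0 (by omega)) ?_
      · simp only [J', Submodule.mul_sup]
        refine sup_le_sup hSJ ?_
        rw [← mul_assoc, ← mul_assoc]
        exact mul_le_mul' (mul_le_mul' (hSE.trans hSleE) le_rfl) le_rfl
      · simp only [J', Submodule.sup_mul]
        refine sup_le_sup hJS ?_
        rw [mul_assoc (E * K)]
        exact mul_le_mul' le_rfl (hES.trans hSleE)
      · intro x hx
        refine le_sup_right (a := J) ?_
        have h1mem : (1 : A) ∈ (1 : Submodule k A) := Submodule.one_le.1 le_rfl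
        have hxK : x ^ (n + 1) ∈ K := Submodule.subset_span ⟨x, hx, rfl⟩
        have := Submodule.mul_mem_mul (Submodule.mul_mem_mul (h1E h1mem) hxK)
          (h1E h1mem)
        simpa using this
    have hfin : J' * S * J' ≤ J := by
      have h1 : J * S * J' ≤ J := (mul_le_mul' hJS hJ'S).trans hJS
      have h2 : E * K * E * S * J ≤ J :=
        (mul_le_mul' ((mul_le_mul' hKE le_rfl).trans hS) le_rfl).trans hSJ
      have h3 : E * K * E * S * (E * K * E) ≤ J := by
        calc E * K * E * S * (E * K * E) = E * (K * (E * S * E) * K) * E := by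
              simp only [mul_assoc]
          _ ≤ E * (K * S * K) * E := by
              gcongr
              exact (mul_le_mul' hES le_rfl).trans hSE
          _ ≤ E * J * E := by gcongr
          _ ≤ J := (mul_le_mul' hEJ le_rfl).trans hJE
      calc J' * S * J' = J * S * J' ⊔ (E * K * E * S * J ⊔ E * K * E * S * (E * K * E)) := by
            rw [← Submodule.mul_sup, ← Submodule.sup_mul, ← Submodule.sup_mul]
        _ ≤ J := sup_le h1 (sup_le h2 h3)
    have hexp : 2 ^ (n + 1 + 1) - 1 = (2 ^ (n + 1) - 1) + 1 + (2 ^ (n + 1) - 1) := by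
      have := Nat.one_le_two_pow (n := n + 1)
      rw [pow_succ 2 (n + 1)]
      omega
    rw [hexp, pow_add, pow_succ]
    exact (mul_le_mul' (mul_le_mul' hind le_rfl) hind).trans hfin

lemma inr_listProd {k R : Type*} [Field k] [NonUnitalRing R] [Module k R] [SMulCommClass k R R]
    [IsScalarTower k R R] (l : List R) : ∀ x : R,
    (Unitization.inr (listProd x l) : Unitization k R) =
      ((x :: l).map fun r => (Unitization.inr r : Unitization k R)).prod := by
  induction l with
  | nil => intro x; simp [listProd]
  | cons y l ih =>
    intro x
    rw [listProd, Unitization.inr_mul, ih, List.map_cons (a := x), List.prod_cons]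

/-- The Nagata–Higman theorem: if `k` is a field of characteristic `0` or of characteristic
greater than `d`, and `R` is a non-unital associative `k`-algebra in which the `d`-fold
product of every element with itself vanishes, then every product of `2 ^ d - 1` elements
of `R` vanishes. -/
theorem nagata_higman (d : ℕ) (hd : 0 < d) (k : Type*) [Field k]
    (hchar : ringChar k = 0 ∨ d < ringChar k)
    (R : Type*) [NonUnitalRing R] [Module k R] [SMulCommClass k R R] [IsScalarTower k R R]
    (hnil : ∀ x : R, listProd x (List.replicate (d - 1) x) = 0) :
    ∀ (x : R) (l : List R), l.length + 1 = 2 ^ d - 1 → listProd x l = 0 := by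
  have hk : ∀ m : ℕ, 0 < m → m ≤ d → (m : k) ≠ 0 := by
    intro m h0 hm h
    have hdvd := (ringChar.spec k m).1 h
    rcases hchar with h' | h'
    · rw [h', zero_dvd_iff] at hdvd
      omega
    · have := Nat.le_of_dvd h0 hdvd
      omega
  intro x l hl
  let S : Submodule k (Unitization k R) := LinearMap.range (Unitization.inrHom k k R)
  have hmem : ∀ r : R, (Unitization.inr r : Unitization k R) ∈ S := fun r => ⟨r, rfl⟩
  obtain ⟨n, rfl⟩ : ∃ n, d = n + 1 := ⟨d - 1, by omega⟩
  have hS : S * S ≤ S := by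
    rw [Submodule.mul_le]
    rintro _ ⟨a, rfl⟩ _ ⟨b, rfl⟩
    exact ⟨a * b, Unitization.inr_mul k a b⟩
  have main := pow_le_of_forall_pow_mem S hS n ⊥ bot_le (by simp) (by simp) hk (by
    rintro _ ⟨a, rfl⟩
    have := inr_listProd (k := k) (List.replicate n a) a
    rw [show listProd a (List.replicate n a) = 0 from hnil a, ← List.replicate_succ,
      List.map_replicate, List.prod_replicate, Unitization.inr_zero] at this
    exact (Submodule.mem_bot k).2 this.symm)
  have hprod : ∀ l : List R,
      (l.map fun r => (Unitization.inr r : Unitization k R)).prod ∈ S ^ l.length := by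
    intro l
    induction l with
    | nil => simp
    | cons y l ih =>
      rw [List.map_cons, List.prod_cons, List.length_cons, pow_succ']
      exact Submodule.mul_mem_mul (hmem y) ih
  have hx := hprod (x :: l)
  rw [List.length_cons, hl, ← inr_listProd] at hx
  exact Unitization.inr_injective ((Submodule.mem_bot k).1 (main hx))
end

section
/- Let A be a commutative Noetherian ring, let R be a unital associative (not necessarily commutative) A-algebra that is finitely generated as an A-algebra, and let d be a positive integer. Suppose that every element r of R is integral over A of degree at most d, i.e., there exists a monic polynomial q ∈ A[X] of degree at most d such that evaluating q at r via the structure map A → R gives 0 in R. Then R is finitely generated as an A-module. -/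
/-!
The proof is Shirshov's combinatorial argument. It has three ingredients.

*A multilinear identity.* Since `1, r, …, r ^ d` satisfy a linear relation over `A` in which `r ^ d`
has coefficient `1`, the Capelli-type expression `∑ σ, sign σ • ∏ j, r ^ σ j * s` vanishes on `R`
(`alternating_powers_eq_zero`). Its monomials are distinct words of equal length in `r` and `s`, so
inclusion–exclusion over sets of substituted variables (`multilinearize`) turns it into a
multilinear identity in which the monomial `x₁ ⋯ xₙ` has coefficient `1`.

*Normal words.* Order words in the generators first by length, then lexicographically. A word is
normal if its value is not an `A`-combination of values of smaller words. Values of normal words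
span `R`, and factors of normal words are normal. A normal word has no nonempty periodic factor
`u ^ e`, with `e` the degree of a monic polynomial killing the value of `u`. It also has no factor
`u₁ ⋯ uₙ` in which the `uᵢ` begin with words `vᵢ` of equal length and `v₁ > ⋯ > vₙ`, because
permuting the `uᵢ` lowers the word and the multilinear identity applies (`not_normalWord_flatten`).

*Infinite words.* If there were infinitely many normal words, König's lemma would give an infinite
word `x` all of whose factors are normal. Either, for some `m`, at least `n` words of length `m`
occur in `x` infinitely often, and they can be met in decreasing order; or the number of such words
is bounded and `x` is eventually periodic, as in the Morse–Hedlund theorem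
(`eventually_periodic_of_bounded`). Both are excluded, so finitely many normal words span `R`.
-/

namespace ShirshovHeight

/-! ### A multilinear identity -/

/-- The signed count of the sets containing the range of `f` vanishes unless `f` is onto: adding or
removing a point outside the range cancels the terms in pairs. -/
theorem sum_signs_superset {n : ℕ} (f : Fin n → Fin n) (hf : ¬ Function.Bijective f) :
    ∑ S : Finset (Fin n), (if ∀ j, f j ∈ S then (-1 : ℤ) ^ S.card else 0) = 0 := by
  have hs : ¬ Function.Surjective f := fun h => hf (Finite.surjective_iff_bijective.mp h)
  simp only [Function.Surjective, not_forall, not_exists] at hs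
  obtain ⟨v, hv⟩ := hs
  refine Finset.sum_involution (fun S _ => if v ∈ S then S.erase v else insert v S) ?_ ?_ ?_ ?_
  · intro S _
    by_cases hvS : v ∈ S
    · have h1 : (∀ j, f j ∈ S.erase v) ↔ ∀ j, f j ∈ S := by simp [hv]
      have h2 : S.card = (S.erase v).card + 1 := (Finset.card_erase_add_one hvS).symm
      simp only [hvS, if_true, h1, h2, pow_succ]
      split_ifs <;> simp
    · have h1 : (∀ j, f j ∈ insert v S) ↔ ∀ j, f j ∈ S := by simp [hv]
      simp only [hvS, if_false, h1, Finset.card_insert_of_notMem hvS, pow_succ]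
      split_ifs <;> simp
  · intro S _ _ h
    by_cases hvS : v ∈ S
    · simp only [hvS, if_true] at h
      exact Finset.notMem_erase v S (h.symm ▸ hvS)
    · simp only [hvS, if_false] at h
      exact hvS (h ▸ Finset.mem_insert_self v S)
  · intro S _; exact Finset.mem_univ _
  · intro S _
    by_cases hvS : v ∈ S <;> simp [hvS]

/-- Full polarization of a homogeneous identity. The words `w t` have a common length `n`, are
distinct, and the word `w t₀` occurs with coefficient `1`. Each of the `n` variables of the resulting
identity stands for one position of `w t₀`. -/
theorem multilinearize {R : Type*} [Ring R] {C T : Type*} [DecidableEq C] [Fintype T]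
    {n : ℕ} (w : T → Fin n → C) (hw : Function.Injective w) (ε : T → ℤ) (t₀ : T) (ht₀ : ε t₀ = 1)
    (hid : ∀ z : C → R, ∑ t, ε t • (List.ofFn fun j => z (w t j)).prod = 0) :
    ∃ c : (Fin n → Fin n) → ℤ, c id = 1 ∧ (∀ f, ¬ Function.Bijective f → c f = 0) ∧
      ∀ x : Fin n → R, ∑ f, c f • (List.ofFn (x ∘ f)).prod = 0 := by
  classical
  let K : (Fin n → Fin n) → ℤ := fun f =>
    ∑ S : Finset (Fin n), (if ∀ j, f j ∈ S then (-1 : ℤ) ^ S.card else 0)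
  let E : (Fin n → Fin n) → ℤ := fun f => ∑ t, if (∀ j, w t₀ (f j) = w t j) then ε t else 0
  have hK : K id = (-1) ^ n := by
    have h : ∀ S : Finset (Fin n), (∀ j, id j ∈ S) ↔ S = Finset.univ := by
      intro S; simp [Finset.eq_univ_iff_forall]
    simp [K, ← Finset.eq_univ_iff_forall]
  have hE : E id = 1 := by
    have h : ∀ t, (∀ j, w t₀ (id j) = w t j) ↔ t = t₀ := by
      intro t
      constructor
      · intro h; exact (hw (funext h)).symm
      · rintro rfl j; rfl
    simp only [E, h]
    simp [ht₀]
  have key : ∀ x : Fin n → R, ∑ f, (E f * K f) • (List.ofFn (x ∘ f)).prod = 0 := by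
    intro x
    -- Substitute for each letter `a` the sum of the `x v` with `v ∈ S` a position of `a` in `w t₀`.
    have h1 : ∀ S : Finset (Fin n), ∑ t, ∑ f : Fin n → Fin n,
        (if ∀ j, f j ∈ S ∧ w t₀ (f j) = w t j then ε t else 0) • (List.ofFn (x ∘ f)).prod = 0 := by
      intro S
      rw [← hid (fun a => ∑ v ∈ S with w t₀ v = a, x v)]
      refine Finset.sum_congr rfl fun t _ => ?_
      have := MultilinearMap.map_sum_finset (MultilinearMap.mkPiAlgebraFin ℤ n R)
        (fun _ v => x v) (fun j => S.filter (fun v => w t₀ v = w t j))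
      simp only [MultilinearMap.mkPiAlgebraFin_apply] at this
      rw [this, Finset.smul_sum]
      simp only [ite_smul, zero_smul]
      rw [← Finset.sum_filter]
      refine Finset.sum_congr ?_ fun f _ => rfl
      ext f
      simp [Fintype.mem_piFinset]
    have h2 : ∑ S : Finset (Fin n), (-1 : ℤ) ^ S.card • ∑ t, ∑ f : Fin n → Fin n,
        (if ∀ j, f j ∈ S ∧ w t₀ (f j) = w t j then ε t else 0) • (List.ofFn (x ∘ f)).prod = 0 := by
      exact Finset.sum_eq_zero fun S _ => by rw [h1, smul_zero]
    rw [← h2]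
    simp only [Finset.smul_sum]
    rw [Finset.sum_comm' (t' := Finset.univ) (s' := fun _ => Finset.univ) (by simp)]
    simp only [E, K, Finset.sum_mul_sum, Finset.sum_smul]
    rw [Finset.sum_comm]
    refine Finset.sum_congr rfl fun t _ => ?_
    rw [Finset.sum_comm]
    conv_rhs => rw [Finset.sum_comm]
    rw [Finset.sum_comm]
    refine Finset.sum_congr rfl fun f _ => ?_
    refine Finset.sum_congr rfl fun S _ => ?_
    rw [smul_smul]
    congr 1
    by_cases ha : ∀ j, f j ∈ S <;> by_cases hb : ∀ j, w t₀ (f j) = w t j <;>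
      simp [ha, hb, forall_and, mul_comm]
  -- `E id * K id = (-1) ^ n`, so a further sign normalizes the leading coefficient to `1`.
  refine ⟨fun f => (-1) ^ n * (E f * K f), ?_, ?_, ?_⟩
  · simp only [hE, hK, one_mul]
    rw [← mul_pow]; simp
  · intro f hf
    have : K f = 0 := sum_signs_superset f hf
    simp [this]
  · intro x
    simp only [mul_smul _ (E _ * K _), ← Finset.smul_sum, key, smul_zero]

/-- An alternating multilinear map vanishes on `(1, r, …, r ^ d)`, since `r ^ d` is a combination of
the other entries; the map used here is the alternatization of `v ↦ ∏ j, v j * s`. -/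
theorem alternating_powers_eq_zero {A R : Type*} [CommRing A] [Ring R] [Algebra A R] {d : ℕ}
    {r : R} {q : Polynomial A} (hq : q.Monic) (hqd : q.natDegree ≤ d)
    (hr : Polynomial.aeval r q = 0) (s : R) :
    ∑ σ : Equiv.Perm (Fin (d + 1)), (Equiv.Perm.sign σ : ℤ) •
      (List.ofFn fun j => r ^ (σ j : ℕ) * s).prod = 0 := by
  have hdep : ∃ a : Fin d → A, r ^ d = ∑ i : Fin d, a i • r ^ (i : ℕ) := by
    rcases subsingleton_or_nontrivial A with hA | hA
    · have : Subsingleton R := Module.subsingleton A R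
      exact ⟨0, Subsingleton.elim _ _⟩
    -- Multiplying by a power of `X` makes the degree exactly `d`.
    set p := q * Polynomial.X ^ (d - q.natDegree) with hp
    have hpm : p.Monic := hq.mul (Polynomial.monic_X_pow _)
    have hpd : p.natDegree = d := by
      rw [hp, hq.natDegree_mul (Polynomial.monic_X_pow _), Polynomial.natDegree_X_pow]
      omega
    have hpr : Polynomial.aeval r p = 0 := by simp [hp, hr]
    rw [Polynomial.aeval_eq_sum_range, hpd, Finset.sum_range_succ] at hpr
    have hl : p.coeff d = 1 := by rw [← hpd]; exact hpm
    rw [hl, one_smul] at hpr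
    refine ⟨fun i => - p.coeff i, ?_⟩
    rw [eq_neg_of_add_eq_zero_right hpr, Finset.sum_range, ← Finset.sum_neg_distrib]
    simp
  obtain ⟨a, ha⟩ := hdep
  let M : MultilinearMap A (fun _ : Fin (d + 1) => R) R :=
    (MultilinearMap.mkPiAlgebraFin A (d + 1) R).compLinearMap
      (fun _ => LinearMap.mulRight A s)
  let v : Fin (d + 1) → R := fun j => r ^ (j : ℕ)
  have hM : MultilinearMap.alternatization M v = 0 := by
    have hv : v = Function.update v (Fin.last d) (∑ i : Fin d, a i • v i.castSucc) := by
      rw [eq_comm, Function.update_eq_self_iff]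
      simp [v, ha]
    rw [hv, AlternatingMap.map_update_sum]
    refine Finset.sum_eq_zero fun i _ => ?_
    rw [AlternatingMap.map_update_smul,
      AlternatingMap.map_update_self _ _ (Fin.castSucc_lt_last i).ne', smul_zero]
  rw [MultilinearMap.alternatization_apply] at hM
  rw [← hM]
  refine Finset.sum_congr rfl fun σ _ => ?_
  simp [M, v, MultilinearMap.domDomCongr_apply, Units.smul_def]

/-- The word `r ^ k₁ s r ^ k₂ s ⋯` attached to a list of exponents `k₁, k₂, …`, with `false` standing
for the letter `r` and `true` for `s`. -/
def powerWord (L : List ℕ) : List Bool := L.flatMap fun k => List.replicate k false ++ [true]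

theorem powerWord_injective : Function.Injective powerWord := by
  intro L
  induction L with
  | nil =>
    intro L' h
    cases L' with
    | nil => rfl
    | cons k l => simp [powerWord] at h
  | cons k l ih =>
    intro L' h
    cases L' with
    | nil => simp [powerWord] at h
    | cons k' l' =>
      have h' : List.replicate k false ++ true :: powerWord l
          = List.replicate k' false ++ true :: powerWord l' := by
        simpa [powerWord] using h
      have hk : k = k' := by
        clear h ih
        induction k generalizing k' with
        | zero => cases k' with
          | zero => rfl
          | succ m => simp [List.replicate_succ] at h'
        | succ m ihm => cases k' with
          | zero => simp [List.replicate_succ] at h'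
          | succ m' => 
            simp only [List.replicate_succ, List.cons_append, List.cons.injEq, true_and] at h'
            rw [ihm _ h']
      subst hk
      have := List.append_cancel_left h'
      simp only [List.cons.injEq, true_and] at this
      rw [ih this]

theorem length_powerWord (L : List ℕ) : (powerWord L).length = L.sum + L.length := by
  induction L with
  | nil => rfl
  | cons k l ih =>
    have : powerWord (k :: l) = List.replicate k false ++ true :: powerWord l := by
      simp [powerWord]
    rw [this]; simp [ih]; omega

theorem prod_powerWord {R : Type*} [Monoid R] (z : Bool → R) (L : List ℕ) :
    ((powerWord L).map z).prod = (L.map fun k => z false ^ k * z true).prod := by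
  induction L with
  | nil => rfl
  | cons k l ih =>
    have : powerWord (k :: l) = List.replicate k false ++ true :: powerWord l := by
      simp [powerWord]
    rw [this]; simp [ih, mul_assoc]

/-- An algebra that is integral of bounded degree satisfies a multilinear polynomial identity, with
integer coefficients, whose monomial in the natural order of the variables has coefficient `1`. -/
theorem exists_multilinear_identity {A R : Type*} [CommRing A] [Ring R] [Algebra A R] (d : ℕ)
    (hint : ∀ r : R, ∃ q : Polynomial A,
      q.Monic ∧ q.natDegree ≤ d ∧ Polynomial.aeval r q = 0) :
    ∃ (n : ℕ) (c : (Fin n → Fin n) → ℤ), c id = 1 ∧ (∀ f, ¬ Function.Bijective f → c f = 0) ∧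
      ∀ x : Fin n → R, ∑ f, c f • (List.ofFn (x ∘ f)).prod = 0 := by
  let W : Equiv.Perm (Fin (d + 1)) → List Bool := fun σ => powerWord (List.ofFn fun j => (σ j : ℕ))
  have hlen : ∀ σ, (W σ).length = (W 1).length := by
    intro σ
    simp only [W, length_powerWord, List.length_ofFn, List.sum_ofFn]
    rw [Equiv.sum_comp σ (fun j => (j : ℕ))]
    simp
  refine ⟨(W 1).length, multilinearize (fun σ j => (W σ).get (j.cast (hlen σ).symm)) ?_
    (fun σ => (Equiv.Perm.sign σ : ℤ)) 1 (by simp) ?_⟩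
  · intro σ τ h
    have h1 : W σ = W τ := by
      refine List.ext_get ((hlen σ).trans (hlen τ).symm) fun i h1 h2 => ?_
      exact congrFun h ⟨i, (hlen σ) ▸ h1⟩
    have h2 := List.ofFn_injective (powerWord_injective h1)
    ext j
    exact congrFun h2 j
  · intro z
    obtain ⟨q, hq, hqd, hr⟩ := hint (z false)
    rw [← alternating_powers_eq_zero hq hqd hr (z true)]
    refine Finset.sum_congr rfl fun σ _ => ?_
    congr 1
    have h1 : (List.ofFn fun j : Fin (W 1).length => z ((W σ).get (j.cast (hlen σ).symm)))
        = (W σ).map z := by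
      refine List.ext_get (by simp [hlen σ]) fun i h1 h2 => ?_
      simp
    rw [h1, prod_powerWord, List.map_ofFn]
    rfl


/-! ### Factors of infinite words -/

/-- The factor `x i, x (i + 1), …, x (i + m - 1)` of length `m` of the infinite word `x`. -/
def factor {α : Type*} (x : ℕ → α) (i m : ℕ) : List α := (List.range' i m).map x

@[simp] theorem length_factor {α : Type*} (x : ℕ → α) (i m : ℕ) : (factor x i m).length = m := by
  simp [factor]

theorem factor_add {α : Type*} (x : ℕ → α) (i m l : ℕ) :
    factor x i (m + l) = factor x i m ++ factor x (i + m) l := by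
  simp [factor, ← List.map_append]

theorem factor_succ {α : Type*} (x : ℕ → α) (i m : ℕ) :
    factor x i (m + 1) = x i :: factor x (i + 1) m := by
  simp [factor, List.range'_succ]

/-- The word `v` occurs in the infinite word `x` at arbitrarily large positions. -/
def Recurrent {α : Type*} (x : ℕ → α) (v : List α) : Prop :=
  ∀ N, ∃ p, N ≤ p ∧ factor x p v.length = v

/-- There are finitely many words of length `m`, so the non-recurrent ones all stop occurring from
some position on. -/
theorem exists_forall_factor_recurrent {α : Type*} [Finite α] (x : ℕ → α) (m : ℕ) :
    ∃ N, ∀ i, N ≤ i → Recurrent x (factor x i m) := by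
  have hfin : {v : List α | v.length = m ∧ ¬ Recurrent x v}.Finite :=
    (List.finite_length_eq α m).subset fun v hv => hv.1
  have h : ∀ v : List α, ∃ N, ¬ Recurrent x v → ∀ p, N ≤ p → factor x p v.length ≠ v := by
    intro v
    by_cases hv : Recurrent x v
    · exact ⟨0, fun h => absurd hv h⟩
    · simp only [Recurrent, not_forall, not_exists, not_and] at hv
      obtain ⟨N, hN⟩ := hv
      exact ⟨N, fun _ => hN⟩
  choose g hg using h
  obtain ⟨B, hB⟩ := (hfin.image g).bddAbove
  refine ⟨B, fun i hi => ?_⟩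
  by_contra hcon
  have h1 : g (factor x i m) ≤ B := hB ⟨_, ⟨by simp, hcon⟩, rfl⟩
  exact hg _ hcon i (h1.trans hi) (by simp)

/-- A form of the Morse–Hedlund theorem for recurrent factors: if their number in each length is
bounded, then it fails to grow from some length `m` to `m + 1`, so every recurrent factor of length
`m` has a unique recurrent extension by one letter, and a repeated factor forces periodicity. -/
theorem eventually_periodic_of_bounded {α : Type*} [Finite α] (x : ℕ → α) (n : ℕ)
    (h : ∀ m, {v : List α | v.length = m ∧ Recurrent x v}.ncard < n) :
    ∃ N p, 0 < p ∧ ∀ i, N ≤ i → x (i + p) = x i := by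
  set F : ℕ → Set (List α) := fun m => {v : List α | v.length = m ∧ Recurrent x v} with hF
  have hfin : ∀ m, (F m).Finite := fun m =>
    (List.finite_length_eq α m).subset fun v hv => hv.1
  have hsub : ∀ m, F m ⊆ List.take m '' F (m + 1) := by
    rintro m v ⟨hv, hr⟩
    obtain ⟨N, hN⟩ := exists_forall_factor_recurrent x (m + 1)
    obtain ⟨p, hp, hpv⟩ := hr N
    refine ⟨factor x p (m + 1), ⟨by simp, hN p hp⟩, ?_⟩
    rw [factor_add, List.take_left' (by simp), ← hv, hpv]
  obtain ⟨m, hm⟩ : ∃ m, (F (m + 1)).ncard ≤ (F m).ncard := by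
    by_contra! hcon
    have : ∀ m, m ≤ (F m).ncard := fun m => by
      induction m with
      | zero => exact Nat.zero_le _
      | succ m ih => exact ih.trans_lt (hcon m)
    exact absurd (h n) (not_lt.mpr (this n))
  have hinj : Set.InjOn (List.take m) (F (m + 1)) := by
    refine Set.injOn_of_ncard_image_eq ?_ (hfin _)
    refine le_antisymm (Set.ncard_image_le (hfin _)) (hm.trans ?_)
    exact Set.ncard_le_ncard (hsub m) ((hfin _).image _)
  obtain ⟨N, hN⟩ := exists_forall_factor_recurrent x (m + 1)
  have hmem : ∀ i, N ≤ i → factor x i (m + 1) ∈ F (m + 1) := fun i hi => ⟨by simp, hN i hi⟩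
  have htake : ∀ i, (factor x i (m + 1)).take m = factor x i m := fun i => by
    rw [factor_add, List.take_left' (by simp)]
  obtain ⟨i, j, hij, he⟩ : ∃ i j, i < j ∧ factor x (N + i) m = factor x (N + j) m := by
    have hf : (Set.range fun i => factor x (N + i) m).Finite :=
      (List.finite_length_eq α m).subset (by rintro _ ⟨i, rfl⟩; simp)
    have : ¬ Function.Injective fun i => factor x (N + i) m := fun hi =>
      Set.infinite_range_of_injective hi hf
    simp only [Function.Injective, not_forall] at this
    obtain ⟨i, j, he, hne⟩ := this
    rcases lt_or_gt_of_ne hne with h | h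
    · exact ⟨i, j, h, he⟩
    · exact ⟨j, i, h, he.symm⟩
  have step : ∀ a b, N ≤ a → N ≤ b → factor x a m = factor x b m →
      x a = x b ∧ factor x (a + 1) m = factor x (b + 1) m := by
    intro a b ha hb hab
    have := hinj (hmem a ha) (hmem b hb) (by rw [htake, htake, hab])
    simpa [factor_succ] using this
  have hall : ∀ t, factor x (N + i + t) m = factor x (N + j + t) m := by
    intro t
    induction t with
    | zero => exact he
    | succ t ih => exact (step _ _ (by omega) (by omega) ih).2
  refine ⟨N + i, j - i, by omega, fun a ha => ?_⟩
  obtain ⟨t, rfl⟩ := Nat.exists_eq_add_of_le ha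
  rw [(step _ _ (by omega) (by omega) (hall t)).1]
  congr 1
  omega

/-- Finitely many recurrent words can be met one after the other, in any prescribed order: some factor
of `x` splits into consecutive blocks `u 0, u 1, …` with `u i` beginning with `v i`. -/
theorem exists_factor_flatten {α : Type*} (x : ℕ → α) : ∀ (n : ℕ) (v : Fin n → List α),
    (∀ i, Recurrent x (v i)) → ∀ N, ∃ p L, N ≤ p ∧ ∃ u : Fin n → List α,
      (∀ i, v i <+: u i) ∧ factor x p L = (List.ofFn u).flatten
  | 0, _, _, N => ⟨N, 0, le_rfl, Fin.elim0, fun i => i.elim0, by simp [factor]⟩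
  | n + 1, v, hv, N => by
    obtain ⟨q, hq, hqv⟩ := hv 0 N
    obtain ⟨p, L, hp, u, hu, hfac⟩ := exists_factor_flatten x n (fun i => v i.succ)
      (fun i => hv i.succ) (q + (v 0).length)
    obtain ⟨e, rfl⟩ := Nat.exists_eq_add_of_le hp
    refine ⟨q, (v 0).length + e + L, hq, Fin.cons (factor x q ((v 0).length + e)) u, ?_, ?_⟩
    · intro i
      refine Fin.cases ?_ (fun i => ?_) i
      · rw [Fin.cons_zero, factor_add, hqv]
        exact List.prefix_append _ _
      · simpa using hu i
    · rw [factor_add, ← add_assoc, hfac]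
      simp [List.ofFn_succ]

theorem factor_periodic {α : Type*} (x : ℕ → α) {N p : ℕ} (h : ∀ i, N ≤ i → x (i + p) = x i)
    (k : ℕ) : factor x N (k * p) = (List.replicate k (factor x N p)).flatten := by
  have hshift : ∀ m i, N ≤ i → factor x (i + p) m = factor x i m := by
    intro m
    induction m with
    | zero => intro i _; simp [factor]
    | succ m ih =>
      intro i hi
      rw [factor_succ, factor_succ, h i hi, add_right_comm, ih (i + 1) (by omega)]
  induction k with
  | zero => simp [factor]
  | succ k ih =>
    rw [Nat.succ_mul, add_comm, factor_add, hshift _ _ le_rfl, ih]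
    simp [List.replicate_succ]

theorem lex_append_of_lex {α : Type*} {r : α → α → Prop} {a b : List α} (h : List.Lex r a b)
    (hl : a.length = b.length) (s t : List α) : List.Lex r (a ++ s) (b ++ t) := by
  induction h with
  | nil => simp at hl
  | cons h ih => exact List.Lex.cons (ih (by simpa using hl))
  | rel h => exact List.Lex.rel h

/-- If the blocks of `L` are decreasing in the strong sense that the comparison is decided inside the
blocks, then concatenating them in any other order gives a lexicographically smaller word: at the
first place where the two lists of blocks differ, `L'` has a later, hence smaller, block of `L`. -/
theorem lex_flatten_of_perm {α : Type*} {r : α → α → Prop} {L L' : List (List α)}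
    (hL : L.Pairwise fun a b => ∀ s t, List.Lex r (b ++ s) (a ++ t))
    (hp : L'.Perm L) (hne : L' ≠ L) : List.Lex r L'.flatten L.flatten := by
  induction L generalizing L' with
  | nil => exact absurd hp.eq_nil hne
  | cons a l ih =>
    cases L' with
    | nil => exact absurd hp.symm.eq_nil (by simp)
    | cons b l' =>
      rw [List.pairwise_cons] at hL
      by_cases hab : b = a
      · subst hab
        rw [List.flatten_cons, List.flatten_cons]
        exact List.Lex.append_left _
          (ih hL.2 (List.perm_cons b |>.mp hp) (fun h => hne (by rw [h]))) _
      · have hb : b ∈ l := by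
          have : b ∈ a :: l := hp.subset (by simp)
          simpa [hab] using this
        rw [List.flatten_cons, List.flatten_cons]
        exact hL.1 b hb _ _

/-- König's lemma for an infinite factor-closed set of words over a finite alphabet. -/
theorem exists_infinite_word {α : Type*} [Finite α] {P : List α → Prop}
    (hfac : ∀ a u b, P (a ++ u ++ b) → P u) (hinf : {w | P w}.Infinite) :
    ∃ x : ℕ → α, ∀ i m, P (factor x i m) := by
  have hpre : ∀ m w, P w → P (w.take m) := fun m w hw =>
    hfac [] (w.take m) (w.drop m) (by simpa using hw)
  let W : ℕ → Type _ := fun m => {w : List α // P w ∧ w.length = m}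
  have hne : ∀ m, Nonempty (W m) := by
    intro m
    obtain ⟨w, hw, hm⟩ : ∃ w, P w ∧ m ≤ w.length := by
      by_contra! hcon
      exact hinf ((List.finite_length_lt α m).subset fun w hw => hcon w hw)
    exact ⟨w.take m, hpre m w hw, by simpa using hm⟩
  have hfinW : ∀ m, Finite (W m) := fun m =>
    Set.Finite.to_subtype (s := {w | P w ∧ w.length = m})
      ((List.finite_length_eq α m).subset fun w hw => hw.2)
  obtain ⟨f, hf⟩ := exists_seq_forall_proj_of_forall_finite (α := W)
    (fun {i j} hij w => ⟨w.1.take i, hpre i _ w.2.1, by simp [w.2.2, hij]⟩)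
    (fun i a => Subtype.ext (by simp [← a.2.2]))
    (fun i j k hij hjk a => Subtype.ext (by simp [List.take_take, hij]))
    (fun i a => Set.toFinite _)
  have hlen : ∀ m, (f m).1.length = m := fun m => (f m).2.2
  let x : ℕ → α := fun i => (f (i + 1)).1[i]'(by rw [hlen]; omega)
  have hx : ∀ m, factor x 0 m = (f m).1 := by
    intro m
    refine List.ext_getElem (by simp [hlen]) fun i h1 h2 => ?_
    have hi : i + 1 ≤ m := by simpa using h1
    have h3 : (f m).1.take (i + 1) = (f (i + 1)).1 := congrArg Subtype.val (hf hi)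
    have h4 : (factor x 0 m)[i] = x i := by simp [factor]
    rw [h4]
    simp only [x]
    simp only [← h3, List.getElem_take]
  refine ⟨x, fun i m => hfac (factor x 0 i) _ [] ?_⟩
  have h := factor_add x 0 i m
  rw [zero_add] at h
  rw [List.append_nil, ← h, hx]
  exact (f _).2.1


/-! ### Normal words -/

/-- A word in the generators `g` is normal if its value is not an `A`-linear combination of values of
words that are smaller in the length-then-lexicographic order. -/
def NormalWord (A : Type*) {R : Type*} [CommRing A] [Ring R] [Algebra A R] {k : ℕ}
    (g : Fin k → R) (w : List (Fin k)) : Prop :=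
  (w.map g).prod ∉
    Submodule.span A ((fun u => (u.map g).prod) '' {u | List.Shortlex (· < ·) u w})

section

variable {A R : Type*} [CommRing A] [Ring R] [Algebra A R] {k : ℕ} {g : Fin k → R}

theorem span_normalWord (A : Type*) {R : Type*} [CommRing A] [Ring R] [Algebra A R] {k : ℕ}
    (g : Fin k → R) (w : List (Fin k)) :
    (w.map g).prod ∈ Submodule.span A ((fun u => (u.map g).prod) '' {u | NormalWord A g u}) := by
  have wf : WellFounded (List.Shortlex ((· < ·) : Fin k → Fin k → Prop)) :=
    List.Shortlex.wf wellFounded_lt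
  induction w using wf.induction with
  | _ w ih =>
    by_cases hw : NormalWord A g w
    · exact Submodule.subset_span ⟨w, hw, rfl⟩
    · refine (Submodule.span_le.mpr ?_) (not_not.mp hw)
      rintro _ ⟨u, hu, rfl⟩
      exact ih u hu

theorem shortlex_append_both {α : Type*} {r : α → α → Prop} {u v : List α}
    (h : List.Shortlex r u v) (a b : List α) : List.Shortlex r (a ++ u ++ b) (a ++ v ++ b) := by
  rw [List.append_assoc, List.append_assoc]
  refine List.Shortlex.append_left ?_ a
  rcases List.shortlex_def.mp h with h | ⟨h, h'⟩
  · exact List.Shortlex.of_length_lt (by simpa using h)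
  · exact List.Shortlex.of_lex (by simpa using h) (lex_append_of_lex h' h b b)

theorem NormalWord.of_append (a u b : List (Fin k)) (h : NormalWord A g (a ++ u ++ b)) :
    NormalWord A g u := by
  intro hu
  apply h
  let φ : R →ₗ[A] R :=
    (LinearMap.mulRight A (b.map g).prod).comp (LinearMap.mulLeft A (a.map g).prod)
  have h1 := Submodule.mem_map_of_mem (f := φ) hu
  rw [Submodule.map_span] at h1
  have h2 : ((a ++ u ++ b).map g).prod = φ (u.map g).prod := by simp [φ, mul_assoc]
  rw [h2]
  refine Submodule.span_mono ?_ h1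
  rintro _ ⟨_, ⟨v, hv, rfl⟩, rfl⟩
  exact ⟨a ++ v ++ b, shortlex_append_both hv a b, by simp [φ, mul_assoc]⟩

/-- An `n`-divisible word is not normal: the multilinear identity `c` expresses its value through the
words obtained by permuting its blocks, all of which are smaller. -/
theorem not_normalWord_flatten {n : ℕ} {c : (Fin n → Fin n) → ℤ} (hc1 : c id = 1)
    (hc0 : ∀ f, ¬ Function.Bijective f → c f = 0)
    (hc : ∀ x : Fin n → R, ∑ f, c f • (List.ofFn (x ∘ f)).prod = 0)
    {m : ℕ} {v u : Fin n → List (Fin k)} (hlen : ∀ i, (v i).length = m)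
    (hv : StrictAnti v) (hu : ∀ i, v i <+: u i) :
    ¬ NormalWord A g (List.ofFn u).flatten := by
  intro hN
  apply hN
  have hlex : ∀ i j, i < j → ∀ s t, List.Lex (· < ·) (u j ++ s) (u i ++ t) := by
    intro i j hij s t
    obtain ⟨e, he⟩ := hu i
    obtain ⟨e', he'⟩ := hu j
    rw [← he, ← he', List.append_assoc, List.append_assoc]
    exact lex_append_of_lex (hv hij) (by rw [hlen, hlen]) _ _
  have huinj : Function.Injective u := by
    have : ∀ i j, i < j → u i ≠ u j := by
      intro i j hij he
      have h := hlex i j hij [] []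
      rw [he] at h
      exact List.lex_irrefl (fun a => lt_irrefl a) _ h
    intro i j he
    rcases lt_trichotomy i j with h | h | h
    · exact absurd he (this _ _ h)
    · exact h
    · exact absurd he.symm (this _ _ h)
  have hprod : ∀ f : Fin n → Fin n, (List.ofFn ((fun i => ((u i).map g).prod) ∘ f)).prod =
      ((List.ofFn (u ∘ f)).flatten.map g).prod := by
    intro f
    rw [List.map_flatten, List.prod_flatten, List.map_ofFn, List.map_ofFn]
    rfl
  have hid := hc (fun i => ((u i).map g).prod)
  rw [← Finset.add_sum_erase _ _ (Finset.mem_univ id), hc1, one_smul] at hid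
  have h1 := eq_neg_of_add_eq_zero_left hid
  rw [hprod] at h1
  change ((List.ofFn u).flatten.map g).prod = _ at h1
  rw [h1]
  refine Submodule.neg_mem _ (Submodule.sum_mem _ fun f hf => ?_)
  by_cases hb : Function.Bijective f
  swap
  · rw [hc0 f hb, zero_smul]; exact Submodule.zero_mem _
  refine zsmul_mem (Submodule.subset_span ?_) _
  rw [hprod]
  refine ⟨_, ?_, rfl⟩
  have hperm : (List.ofFn (u ∘ f)).Perm (List.ofFn u) :=
    Equiv.Perm.ofFn_comp_perm (Equiv.ofBijective f hb) u
  refine List.Shortlex.of_lex hperm.flatten.length_eq (lex_flatten_of_perm ?_ hperm ?_)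
  · exact List.pairwise_ofFn.mpr fun i j hij => hlex i j hij
  · intro he
    refine (Finset.mem_erase.mp hf).1 (funext fun i => huinj ?_)
    exact congrFun (List.ofFn_injective he) i

theorem not_normalWord_power {u : List (Fin k)} (hu : 0 < u.length) {q : Polynomial A}
    (hq : q.Monic) (hr : Polynomial.aeval (u.map g).prod q = 0) :
    ¬ NormalWord A g (List.replicate q.natDegree u).flatten := by
  intro hN
  apply hN
  have hprod : ∀ j, ((List.replicate j u).flatten.map g).prod = (u.map g).prod ^ j := by
    intro j
    simp [List.map_flatten, List.prod_flatten]
  rw [Polynomial.aeval_eq_sum_range, Finset.sum_range_succ, hq.coeff_natDegree, one_smul] at hr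
  rw [hprod, eq_neg_of_add_eq_zero_right hr]
  refine Submodule.neg_mem _ (Submodule.sum_mem _ fun j hj => ?_)
  refine Submodule.smul_mem _ _ (Submodule.subset_span ⟨(List.replicate j u).flatten, ?_, hprod j⟩)
  refine List.Shortlex.of_length_lt ?_
  simpa using Nat.mul_lt_mul_of_pos_right (Finset.mem_range.mp hj) hu

/-- The dichotomy for an infinite word with normal factors: either it is eventually periodic, or it
has `n` recurrent factors of equal length; each case produces a factor that is not normal. -/
theorem finite_normalWord {n : ℕ} {c : (Fin n → Fin n) → ℤ} (hc1 : c id = 1)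
    (hc0 : ∀ f, ¬ Function.Bijective f → c f = 0)
    (hc : ∀ x : Fin n → R, ∑ f, c f • (List.ofFn (x ∘ f)).prod = 0)
    (hint : ∀ r : R, ∃ q : Polynomial A, q.Monic ∧ Polynomial.aeval r q = 0) :
    {w | NormalWord A g w}.Finite := by
  by_contra hinf
  obtain ⟨x, hx⟩ := exists_infinite_word (P := NormalWord A g) NormalWord.of_append hinf
  by_cases hbd : ∀ m, {v : List (Fin k) | v.length = m ∧ Recurrent x v}.ncard < n
  · obtain ⟨N, p, hp, hper⟩ := eventually_periodic_of_bounded x n hbd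
    obtain ⟨q, hq, hr⟩ := hint ((factor x N p).map g).prod
    refine not_normalWord_power (by simpa using hp) hq hr ?_
    rw [← factor_periodic x hper]
    exact hx _ _
  · push Not at hbd
    obtain ⟨m, hm⟩ := hbd
    have hfin : {v : List (Fin k) | v.length = m ∧ Recurrent x v}.Finite :=
      (List.finite_length_eq _ m).subset fun v hv => hv.1
    rw [Set.ncard_eq_toFinset_card _ hfin] at hm
    obtain ⟨s, hs, hcard⟩ := Finset.exists_subset_card_eq hm
    let v : Fin n → List (Fin k) := fun i => s.orderEmbOfFin hcard i.rev
    have hmem : ∀ i, (v i).length = m ∧ Recurrent x (v i) := fun i => by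
      simpa using hs (s.orderEmbOfFin_mem hcard i.rev)
    have hanti : StrictAnti v := fun i j hij =>
      (s.orderEmbOfFin hcard).strictMono (Fin.rev_lt_rev.mpr hij)
    obtain ⟨p, L, -, u, hu, hfac⟩ := exists_factor_flatten x n v (fun i => (hmem i).2) 0
    refine not_normalWord_flatten (A := A) (g := g) hc1 hc0 hc (fun i => (hmem i).1) hanti hu ?_
    rw [← hfac]
    exact hx _ _

end

end ShirshovHeight

/-- A finitely generated associative algebra over a commutative Noetherian ring in which
every element is integral of degree at most `d` is finitely generated as a module. -/
theorem module_finite_of_finiteType_of_bounded_integral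
    (A : Type*) [CommRing A] [IsNoetherianRing A]
    (R : Type*) [Ring R] [Algebra A R] [Algebra.FiniteType A R]
    (d : ℕ) (hd : 0 < d)
    (hint : ∀ r : R, ∃ q : Polynomial A,
      q.Monic ∧ q.natDegree ≤ d ∧ Polynomial.aeval r q = 0) :
    Module.Finite A R := by
  obtain ⟨S, hS⟩ := (Algebra.FiniteType.out : (⊤ : Subalgebra A R).FG)
  let g : Fin S.card → R := fun i => S.equivFin.symm i
  obtain ⟨n, c, hc1, hc0, hc⟩ := ShirshovHeight.exists_multilinear_identity d hint
  have hfin : {w | ShirshovHeight.NormalWord A g w}.Finite :=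
    ShirshovHeight.finite_normalWord hc1 hc0 hc fun r =>
      let ⟨q, hq, _, hr⟩ := hint r
      ⟨q, hq, hr⟩
  refine Module.finite_def.mpr ⟨(hfin.image fun u => (u.map g).prod).toFinset, ?_⟩
  rw [Set.Finite.coe_toFinset, eq_top_iff, ← Algebra.top_toSubmodule, ← hS,
    Algebra.adjoin_eq_span, Submodule.span_le]
  intro y hy
  obtain ⟨l, hl, rfl⟩ := Submonoid.exists_list_of_mem_closure hy
  obtain ⟨w, rfl⟩ : ∃ w : List (Fin S.card), w.map g = l := by
    have : l ∈ Set.range (List.map g) := by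
      rw [Set.range_list_map]
      intro z hz
      exact ⟨S.equivFin ⟨z, hl z hz⟩, by simp [g]⟩
    exact this
  exact ShirshovHeight.span_normalWord A g w
end

section
/- Let L ⊆ K be an extension of fields of characteristic p > 0 such that the degree [K : L] = q is a power of p and x^q ∈ L for every x ∈ K. Then for every α ∈ K, the characteristic polynomial of the L-linear endomorphism of K given by multiplication by α is equal to X^q − α^q, which lies in L[X] because α^q ∈ L. -/
/-!
Let `M` be the matrix of multiplication by `α` in an `L`-basis of `K`. In characteristic `p`, the
`q`-th power map is additive on commuting elements, so over `L[X]`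
`(X - M) ^ q = X ^ q - M ^ q = X ^ q - a`, a scalar matrix of size `q`. Taking determinants gives
`charpoly ^ q = (X ^ q - a) ^ q`, and the iterated Frobenius is injective on the domain `L[X]`.
-/

/-- Let `L ⊆ K` be fields of characteristic `p > 0` with `[K : L] = q` a power of `p`, and
suppose `x ^ q ∈ L` for every `x ∈ K`.  Then for every `α ∈ K` the characteristic polynomial
of the `L`-linear endomorphism of `K` given by multiplication by `α` equals `X ^ q - C a`,
where `a ∈ L` is the element with image `α ^ q`. -/
theorem charpoly_mulLeft_purely_inseparable
    (p : ℕ) [Fact p.Prime] (L K : Type*) [Field L] [Field K] [Algebra L K]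
    [CharP K p] [FiniteDimensional L K]
    (q : ℕ) (hq : ∃ n : ℕ, q = p ^ n)
    (hdeg : Module.finrank L K = q)
    (hpow : ∀ x : K, x ^ q ∈ (algebraMap L K).range)
    (α : K) (a : L) (ha : algebraMap L K a = α ^ q) :
    (LinearMap.mulLeft L α).charpoly = Polynomial.X ^ q - Polynomial.C a := by
  obtain ⟨n, rfl⟩ := hq
  have : CharP L p := (algebraMap L K).charP (algebraMap L K).injective p
  let b := Module.finBasisOfFinrankEq L K hdeg
  have : Nonempty (Fin (p ^ n)) := b.index_nonempty
  rw [← LinearMap.charpoly_toMatrix _ b]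
  set M := LinearMap.toMatrix b b (LinearMap.mulLeft L α) with hM
  have hMq : M ^ p ^ n = Matrix.scalar _ a := by
    have h : (LinearMap.mulLeft L α) ^ p ^ n = algebraMap L (Module.End L K) a := by
      rw [LinearMap.pow_mulLeft, ← ha]
      ext x
      simp [Algebra.smul_def]
    rw [hM, LinearMap.toMatrix_pow, h, LinearMap.toMatrix_algebraMap]
  have key : M.charmatrix ^ p ^ n =
      Matrix.scalar _ (Polynomial.X ^ p ^ n - Polynomial.C a) := by
    rw [Matrix.charmatrix, sub_pow_char_pow_of_commute (p := p) _
      (Matrix.scalar_commute _ (Commute.all _) _), ← map_pow, ← map_pow, hMq, map_sub]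
    congr 1
    ext i j
    by_cases hij : i = j <;> simp [Matrix.diagonal, hij]
  have hdet := congrArg Matrix.det key
  rw [Matrix.det_pow, Matrix.scalar_apply, Matrix.det_diagonal, Finset.prod_const,
    Finset.card_univ, Fintype.card_fin] at hdet
  exact iterateFrobenius_inj (Polynomial L) p n hdet
end

section
/- Let R be a commutative Noetherian ring and I ⊆ R an ideal such that R is I-adically complete and separated, and let M be a flat R-module. Then for every finitely generated R-module N, the natural R-linear map N ⊗_R M̂ → (N ⊗_R M)̂ from the tensor product of N with the I-adic completion of M to the I-adic completion of N ⊗_R M is an isomorphism. -/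
/-!
Write `c_N : N ⊗ M̂ → (N ⊗ M)̂` for the natural map. It is natural in `N`, and for `F = Rⁿ` it is
an isomorphism because both sides are additive in `N`.

For finite `N`, choose a surjection `p : F → N` with `F = Rⁿ`, and let `K = ker p`, which is again
finite. Completion preserves surjections, so `c_N` is surjective, and so is `c_K`. Injectivity of
`c_N` follows by a diagram chase from injectivity of `c_F`, surjectivity of `c_K`, and exactness of
`(K ⊗ M)̂ → (F ⊗ M)̂ → (N ⊗ M)̂` in the middle.

The last point is the essential one (`ker_le_range_of_artinRees`): completion preserves exactness
of `A → B → C → 0` at `B` as soon as the image of `A` satisfies an Artin-Rees condition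
`IⁿB ∩ f(A) ⊆ f(Iⁿ⁻ᵏA)`. For `K ⊆ F` this is the Artin-Rees lemma, and flatness of `M` carries
the condition over to `K ⊗ M → F ⊗ M` (`artinRees_rTensor`).
-/

open scoped TensorProduct

namespace TensorAdicCompletion

variable {R : Type*} [CommRing R] (I : Ideal R)

section Exactness

variable {A B C : Type*} [AddCommGroup A] [Module R A] [AddCommGroup B] [Module R B]
  [AddCommGroup C] [Module R C]

/-- Middle exactness of completion under an Artin-Rees condition on `f`. No module has to be finite
and `f` need not be injective: a Cauchy sequence `b` with `g (b n) → 0` is approximated by `f (a n)`,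
and the Artin-Rees condition allows the increments of `a` to be corrected within `ker f` so that
`a` becomes Cauchy. -/
lemma ker_le_range_of_artinRees {f : A →ₗ[R] B} {g : B →ₗ[R] C} (hfg : Function.Exact f g)
    (hg : Function.Surjective g) (k : ℕ)
    (hk : ∀ n (a : A), f a ∈ (I ^ (k + n) • ⊤ : Submodule R B) →
      ∃ a' ∈ (I ^ n • ⊤ : Submodule R A), f a' = f a)
    (x : AdicCompletion I B) (hx : AdicCompletion.map I g x = 0) :
    ∃ y, AdicCompletion.map I f y = x := by
  induction x using AdicCompletion.induction_on with
  | _ b =>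
  have hb (n : ℕ) : ∃ a : A, b n - f a ∈ (I ^ n • ⊤ : Submodule R B) := by
    have h1 : g (b n) ∈ (I ^ n • ⊤ : Submodule R C) := by
      simpa using congrArg (fun x ↦ x.val n) hx
    rw [← LinearMap.range_eq_top.mpr hg, ← Submodule.map_top, ← Submodule.map_smul''] at h1
    obtain ⟨d, hd, hgd⟩ := h1
    obtain ⟨a, ha⟩ := (hfg (b n - d)).mp (by simp [hgd])
    exact ⟨a, by simpa [ha] using hd⟩
  choose a ha using hb
  have hle {m n : ℕ} (h : m ≤ n) : (I ^ n • ⊤ : Submodule R B) ≤ I ^ m • ⊤ :=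
    Submodule.smul_mono_left (Ideal.pow_le_pow_right h)
  have hδ (n : ℕ) : ∃ δ ∈ (I ^ n • ⊤ : Submodule R A), f δ = f (a (k + n + 1) - a (k + n)) := by
    apply hk
    have h1 : b (k + n) - b (k + n + 1) ∈ (I ^ (k + n) • ⊤ : Submodule R B) := by
      rw [← SModEq.sub_mem]
      exact b.2 (Nat.le_succ _)
    have h2 := hle (Nat.le_succ (k + n)) (ha (k + n + 1))
    have h3 := Submodule.sub_mem _ (Submodule.sub_mem _ (ha (k + n)) h1) h2
    convert h3 using 1
    rw [map_sub]
    abel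
  choose δ hδmem hδ using hδ
  let s (n : ℕ) : A := a k + ∑ j ∈ Finset.range n, δ j
  have hs (n : ℕ) : f (s n) = f (a (k + n)) := by
    induction n with
    | zero => simp [s]
    | succ n ih =>
      have : s (n + 1) = s n + δ n := by simp [s, Finset.sum_range_succ, add_assoc]
      rw [this, map_add, ih, hδ, map_sub, add_sub_cancel, add_assoc]
  refine ⟨AdicCompletion.mk I A (AdicCompletion.AdicCauchySequence.mk I A s fun n ↦ ?_), ?_⟩
  · refine SModEq.symm (SModEq.sub_mem.mpr ?_)
    simpa [s, Finset.sum_range_succ] using hδmem n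
  · refine AdicCompletion.ext fun n ↦ ?_
    rw [AdicCompletion.map_mk]
    change Submodule.Quotient.mk (f (s n)) = Submodule.Quotient.mk (b n)
    rw [Submodule.Quotient.eq, hs]
    have h1 : b n - b (k + n) ∈ (I ^ n • ⊤ : Submodule R B) := by
      rw [← SModEq.sub_mem]
      exact b.2 (Nat.le_add_left _ _)
    have h2 := Submodule.add_mem _ h1 (hle (Nat.le_add_left n k) (ha (k + n)))
    rw [← Submodule.neg_mem_iff]
    convert h2 using 1
    abel

end Exactness

section ArtinRees

variable (M : Type*) [AddCommGroup M] [Module R M]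

lemma rTensor_mem_smul_top {A B : Type*} [AddCommGroup A] [Module R A] [AddCommGroup B]
    [Module R B] (J : Ideal R) (f : A →ₗ[R] B) (hf : ∀ a, f a ∈ (J • ⊤ : Submodule R B))
    (t : A ⊗[R] M) : f.rTensor M t ∈ (J • ⊤ : Submodule R (B ⊗[R] M)) := by
  induction t with
  | zero => simp
  | add x y hx hy => rw [map_add]; exact Submodule.add_mem _ hx hy
  | tmul a m =>
    rw [LinearMap.rTensor_tmul]
    have h : (TensorProduct.mk R B M).flip m (f a) ∈
        (J • ⊤ : Submodule R B).map ((TensorProduct.mk R B M).flip m) :=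
      Submodule.mem_map_of_mem (hf a)
    rw [Submodule.map_smul''] at h
    exact (smul_mono_right J le_top : J • _ ≤ (J • ⊤ : Submodule R (B ⊗[R] M))) h

/-- The Artin-Rees condition for `K ⊆ F` survives tensoring with a flat module: tensoring
`0 → K ∩ IⁿF → K → F / IⁿF` with `M` shows that an element of `K ⊗ M` landing in `Iⁿ(F ⊗ M)`
comes from `(K ∩ IⁿF) ⊗ M`. -/
lemma artinRees_rTensor [IsNoetherianRing R] [Module.Flat R M] {F : Type*} [AddCommGroup F]
    [Module R F] [Module.Finite R F] (K : Submodule R F) :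
    ∃ k, ∀ n (t : K ⊗[R] M),
      K.subtype.rTensor M t ∈ (I ^ (k + n) • ⊤ : Submodule R (F ⊗[R] M)) →
      t ∈ (I ^ n • ⊤ : Submodule R (K ⊗[R] M)) := by
  obtain ⟨k, hk⟩ := Ideal.exists_pow_inf_eq_pow_smul I K
  refine ⟨k, fun n t ht ↦ ?_⟩
  let q := (I ^ (k + n) • ⊤ : Submodule R F).mkQ
  let h := q ∘ₗ K.subtype
  have hex := Module.Flat.rTensor_exact M (LinearMap.exact_subtype_ker_map h)
  have hzero : h.rTensor M t = 0 := by
    rw [LinearMap.rTensor_comp, LinearMap.comp_apply, ← LinearMap.mem_ker]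
    refine (Submodule.smul_le.mpr ?_ : I ^ (k + n) • ⊤ ≤ LinearMap.ker (q.rTensor M)) ht
    intro r hr u _
    rw [LinearMap.mem_ker, map_smul]
    induction u with
    | zero => simp
    | add x y hx hy => rw [map_add, smul_add, hx trivial, hy trivial, add_zero]
    | tmul v m =>
      have : r • q v = 0 := by
        rw [← map_smul, ← LinearMap.mem_ker, Submodule.ker_mkQ]
        exact Submodule.smul_mem_smul hr trivial
      rw [LinearMap.rTensor_tmul, TensorProduct.smul_tmul', this, TensorProduct.zero_tmul]
  obtain ⟨u, rfl⟩ := (hex t).mp hzero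
  refine rTensor_mem_smul_top M _ _ (fun a ↦ ?_) u
  have ha : (a : K).1 ∈ (I ^ (k + n) • ⊤ ⊓ K : Submodule R F) := by
    refine ⟨?_, (a : K).2⟩
    have h1 : q a.1.1 = 0 := a.2
    rwa [← LinearMap.mem_ker, Submodule.ker_mkQ] at h1
  rw [hk (k + n) (Nat.le_add_right _ _), Nat.add_sub_cancel_left] at ha
  have ha' : (a : K).1 ∈ I ^ n • K := (smul_mono_right _ inf_le_right : I ^ n • (I ^ k • ⊤ ⊓ K) ≤ _) ha
  have hmap : (I ^ n • ⊤ : Submodule R K).map K.subtype = I ^ n • K := by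
    rw [Submodule.map_smul'', Submodule.map_top, Submodule.range_subtype]
  rw [← hmap] at ha'
  obtain ⟨y, hy, hya⟩ := ha'
  rwa [Submodule.subtype_injective K hya] at hy

end ArtinRees

section Comparison

variable (M : Type*) [AddCommGroup M] [Module R M] (N : Type*) [AddCommGroup N] [Module R N]

/-- The natural map `N ⊗ M̂ → (N ⊗ M)̂`, sending `n ⊗ x` to the image of `x` under the completion
of `m ↦ n ⊗ m`. -/
noncomputable def comparison : N ⊗[R] AdicCompletion I M →ₗ[R] AdicCompletion I (N ⊗[R] M) :=
  TensorProduct.lift <| LinearMap.mk₂ R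
    (fun n x ↦ AdicCompletion.map I (TensorProduct.mk R N M n) x)
    (fun n n' x ↦ by
      induction x using AdicCompletion.induction_on
      ext
      simp)
    (fun r n x ↦ by
      induction x using AdicCompletion.induction_on
      ext
      simp
      rfl)
    (fun n x y ↦ map_add _ x y)
    (fun r n x ↦ by
      induction x using AdicCompletion.induction_on
      ext
      simp)

@[simp]
lemma comparison_tmul (n : N) (x : AdicCompletion I M) :
    comparison I M N (n ⊗ₜ x) = AdicCompletion.map I (TensorProduct.mk R N M n) x :=
  rfl

variable {N} in
lemma comparison_naturality {N' : Type*} [AddCommGroup N'] [Module R N'] (p : N →ₗ[R] N')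
    (t : N ⊗[R] AdicCompletion I M) :
    comparison I M N' (p.rTensor _ t) =
      AdicCompletion.map I (p.rTensor M) (comparison I M N t) := by
  induction t with
  | zero => simp
  | add x y hx hy => simp only [map_add, hx, hy]
  | tmul n x =>
    rw [LinearMap.rTensor_tmul, comparison_tmul, comparison_tmul, AdicCompletion.map_comp_apply]
    rfl

section Free

variable (n : ℕ)

/-- The `i`-th coordinate map `Rⁿ ⊗ P → P`. -/
noncomputable def coord (P : Type*) [AddCommGroup P] [Module R P] (i : Fin n) :
    (Fin n → R) ⊗[R] P →ₗ[R] P :=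
  (TensorProduct.lid R P).toLinearMap ∘ₗ
    (LinearMap.proj i : (Fin n → R) →ₗ[R] R).rTensor P

lemma sum_single_tmul_coord (P : Type*) [AddCommGroup P] [Module R P]
    (t : (Fin n → R) ⊗[R] P) :
    ∑ i, (Pi.single i (1 : R) : Fin n → R) ⊗ₜ[R] coord n P i t = t := by
  induction t with
  | zero => simp
  | add x y hx hy =>
    simp only [map_add, TensorProduct.tmul_add, Finset.sum_add_distrib, hx, hy]
  | tmul v x =>
    simp only [coord, LinearMap.comp_apply, LinearMap.rTensor_tmul, LinearEquiv.coe_coe,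
      TensorProduct.lid_tmul, LinearMap.proj_apply, ← TensorProduct.smul_tmul,
      ← TensorProduct.sum_tmul]
    congr 1
    ext j
    simp [Pi.single_apply]

lemma map_coord_comparison (i : Fin n) (t : (Fin n → R) ⊗[R] AdicCompletion I M) :
    AdicCompletion.map I (coord n M i) (comparison I M (Fin n → R) t) = coord n _ i t := by
  induction t with
  | zero => simp
  | add x y hx hy => simp only [map_add, hx, hy]
  | tmul v x =>
    rw [comparison_tmul, AdicCompletion.map_comp_apply]
    induction x using AdicCompletion.induction_on
    ext
    simp [coord]
    rfl

lemma comparison_pi_injective : Function.Injective (comparison I M (Fin n → R)) := by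
  rw [injective_iff_map_eq_zero]
  intro t ht
  rw [← sum_single_tmul_coord n _ t]
  simp [← map_coord_comparison, ht]

lemma comparison_pi_surjective : Function.Surjective (comparison I M (Fin n → R)) := by
  intro z
  refine ⟨∑ i, Pi.single i (1 : R) ⊗ₜ AdicCompletion.map I (coord n M i) z, ?_⟩
  simp only [map_sum, comparison_tmul, AdicCompletion.map_comp_apply]
  induction z using AdicCompletion.induction_on with
  | _ z =>
  refine AdicCompletion.ext fun m ↦ ?_
  rw [AdicCompletion.val_sum_apply]
  simp only [AdicCompletion.map_mk, AdicCompletion.mk_apply_coe,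
    AdicCompletion.AdicCauchySequence.map_apply_coe]
  rw [← map_sum]
  congr 1
  exact sum_single_tmul_coord n M (z m)

end Free

lemma comparison_surjective [Module.Finite R N] : Function.Surjective (comparison I M N) := by
  obtain ⟨n, p, hp⟩ := Module.Finite.exists_fin' R N
  intro z
  obtain ⟨w, rfl⟩ := AdicCompletion.map_surjective I (LinearMap.rTensor_surjective M hp) z
  obtain ⟨t, rfl⟩ := comparison_pi_surjective I M n w
  exact ⟨_, comparison_naturality I M p t⟩

lemma comparison_injective [IsNoetherianRing R] [Module.Flat R M] [Module.Finite R N] :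
    Function.Injective (comparison I M N) := by
  obtain ⟨n, p, hp⟩ := Module.Finite.exists_fin' R N
  rw [injective_iff_map_eq_zero]
  intro x hx
  obtain ⟨y, rfl⟩ := LinearMap.rTensor_surjective (AdicCompletion I M) hp x
  rw [comparison_naturality] at hx
  obtain ⟨k, hk⟩ := artinRees_rTensor I M (LinearMap.ker p)
  obtain ⟨z, hz⟩ := ker_le_range_of_artinRees I
    (rTensor_exact M (LinearMap.exact_subtype_ker_map p) hp) (LinearMap.rTensor_surjective M hp)
    k (fun m t ht ↦ ⟨t, hk m t ht, rfl⟩) _ hx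
  obtain ⟨w, rfl⟩ := comparison_surjective I M (LinearMap.ker p) z
  rw [← comparison_naturality] at hz
  rw [← comparison_pi_injective I M n hz]
  exact (rTensor_exact (AdicCompletion I M)
    (LinearMap.exact_subtype_ker_map p) hp).apply_apply_eq_zero w

end Comparison

end TensorAdicCompletion

/-- Let `R` be a commutative Noetherian ring, `I`-adically complete and separated for an
ideal `I`, and let `M` be a flat `R`-module.  For every finitely generated `R`-module `N`,
the natural map `N ⊗[R] M̂ → (N ⊗[R] M)̂` (where `̂` denotes `I`-adic completion) is an
isomorphism. -/
theorem tensor_adicCompletion_iso_of_flat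
    (R : Type*) [CommRing R] [IsNoetherianRing R] (I : Ideal R) [IsAdicComplete I R]
    (M : Type*) [AddCommGroup M] [Module R M] (hM : Module.Flat R M)
    (N : Type*) [AddCommGroup N] [Module R N] (hN : Module.Finite R N) :
    ∃ g : N ⊗[R] AdicCompletion I M →ₗ[R] AdicCompletion I (N ⊗[R] M),
      (∀ (n : N) (x : AdicCompletion I M),
        g (n ⊗ₜ[R] x) = AdicCompletion.map I (TensorProduct.mk R N M n) x) ∧
      Function.Bijective g :=
  ⟨TensorAdicCompletion.comparison I M N, fun _ _ ↦ rfl,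
    TensorAdicCompletion.comparison_injective I M N,
    TensorAdicCompletion.comparison_surjective I M N⟩
end

section
/- Let R be a commutative Noetherian ring and I ⊆ R an ideal such that R is I-adically complete and separated, and let M be a flat R-module. Then the I-adic completion M̂ of M is a flat R-module. Moreover, if M is faithfully flat over R, then M̂ is faithfully flat over R. -/
/-!
Flatness of the completion comes from exactness. Fix a linear map `f : P → N` of finitely generated
`R`-modules. By the Artin–Rees lemma some `c` satisfies `f⁻¹(I ^ (n + c) N) ⊆ ker f + I ^ n P` for
all `n`. Tensoring with a flat module `M` preserves this property with the same `c`
(`exists_artinRees_lTensor`), although `M ⊗ N` need not be finitely generated. An exact sequence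
whose two maps have the property stays exact after `I`-adic completion
(`map_exact_of_artinRees`). Apply this to `M ⊗ R ^ k → M ⊗ R ^ l → M`, obtained from a
presentation of the kernel of a row vector `R ^ l → R`. The completed sequence is
`M̂ ^ k → M̂ ^ l → M̂`, and its exactness says that every linear relation in `M̂` is trivial. This
is the equational criterion for flatness.

For faithful flatness, completeness of `R` puts `I` inside every maximal ideal `m`. Hence `M̂`
surjects onto `M / I M`, which surjects onto `M / m M ≠ 0`.
-/

open TensorProduct LinearMap

/-- The Artin–Rees property of a map of finitely generated modules survives tensoring with a
flat module. -/
lemma exists_artinRees_lTensor {R : Type*} [CommRing R] [IsNoetherianRing R] (I : Ideal R)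
    (M : Type*) [AddCommGroup M] [Module R M] [Module.Flat R M]
    {P N : Type*} [AddCommGroup P] [Module R P] [AddCommGroup N] [Module R N]
    [Module.Finite R N] (f : P →ₗ[R] N) :
    ∃ c : ℕ, ∀ (n : ℕ) (x : M ⊗[R] P),
      f.lTensor M x ∈ (I ^ (n + c) • ⊤ : Submodule R (M ⊗[R] N)) →
      ∃ y ∈ (I ^ n • ⊤ : Submodule R (M ⊗[R] P)), f.lTensor M y = f.lTensor M x := by
  obtain ⟨c, hc⟩ := Ideal.exists_pow_inf_eq_pow_smul I (range f)
  refine ⟨c, fun n x hx ↦ ?_⟩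
  set q := (I ^ (n + c) • ⊤ : Submodule R N).mkQ with hq
  have hzero : (q ∘ₗ f).lTensor M x = 0 := by
    rw [lTensor_comp, LinearMap.comp_apply]
    -- `I ^ (n + c)` annihilates the target, so `lTensor M q` kills `I ^ (n + c) (M ⊗ N)`.
    have hle : (I ^ (n + c) • ⊤ : Submodule R (M ⊗[R] N)) ≤ ker (q.lTensor M) := by
      rw [Submodule.smul_le]
      intro r hr t ht
      clear ht
      rw [LinearMap.mem_ker]
      induction t with
      | zero => simp
      | add a b ha hb => rw [smul_add, map_add, ha, hb, add_zero]
      | tmul m v =>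
        rw [← tmul_smul, lTensor_tmul]
        have : q (r • v) = 0 := by
          rw [hq, Submodule.mkQ_apply, Submodule.Quotient.mk_eq_zero]
          exact Submodule.smul_mem_smul hr trivial
        rw [this, tmul_zero]
    exact hle hx
  -- By flatness, `x` comes from `M ⊗ f⁻¹(I ^ (n + c) N)`.
  obtain ⟨t, rfl⟩ :=
    (Module.Flat.lTensor_exact M (LinearMap.exact_subtype_ker_map (q ∘ₗ f)) x).mp hzero
  clear hx hzero
  induction t with
  | zero => exact ⟨0, zero_mem _, by simp⟩
  | add a b ha hb =>
    obtain ⟨y, hy, hy'⟩ := ha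
    obtain ⟨z, hz, hz'⟩ := hb
    exact ⟨y + z, add_mem hy hz, by simp only [map_add, hy', hz']⟩
  | tmul m v =>
    obtain ⟨v, hv⟩ := v
    have hfv : f v ∈ I ^ n • range f := by
      have h : f v ∈ (I ^ (n + c) • ⊤ ⊓ range f : Submodule R N) :=
        ⟨by simpa [hq] using hv, mem_range_self f v⟩
      rw [hc (n + c) (by lia), Nat.add_sub_cancel] at h
      exact (smul_mono_right _ inf_le_right : _ ≤ I ^ n • range f) h
    rw [← Submodule.map_top, ← Submodule.map_smul''] at hfv
    obtain ⟨p, hp, hpv⟩ := hfv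
    refine ⟨m ⊗ₜ p, ?_, by simp [hpv]⟩
    have h : TensorProduct.mk R M P m p ∈
        (I ^ n • ⊤ : Submodule R P).map (TensorProduct.mk R M P m) :=
      Submodule.mem_map_of_mem hp
    rw [Submodule.map_smul''] at h
    exact (smul_mono_right _ le_top : _ ≤ (I ^ n • ⊤ : Submodule R (M ⊗[R] P))) h

/-- Completion preserves exactness in the middle when both maps have the Artin–Rees property. -/
lemma map_exact_of_artinRees {R : Type*} [CommRing R] (I : Ideal R)
    {M N P : Type*} [AddCommGroup M] [Module R M] [AddCommGroup N] [Module R N]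
    [AddCommGroup P] [Module R P] {f : M →ₗ[R] N} {g : N →ₗ[R] P} (hfg : Function.Exact f g)
    (hf : ∃ c : ℕ, ∀ (n : ℕ) (x : M), f x ∈ (I ^ (n + c) • ⊤ : Submodule R N) →
      ∃ y ∈ (I ^ n • ⊤ : Submodule R M), f y = f x)
    (hg : ∃ d : ℕ, ∀ (n : ℕ) (x : N), g x ∈ (I ^ (n + d) • ⊤ : Submodule R P) →
      ∃ y ∈ (I ^ n • ⊤ : Submodule R N), g y = g x)
    (z : AdicCompletion I N) (hz : AdicCompletion.map I g z = 0) :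
    ∃ w, AdicCompletion.map I f w = z := by
  obtain ⟨c, hc⟩ := hf
  obtain ⟨d, hd⟩ := hg
  obtain ⟨b, rfl⟩ := AdicCompletion.mk_surjective I N z
  have hb (n : ℕ) : g (b n) ∈ (I ^ n • ⊤ : Submodule R P) := by
    simpa using congrArg (fun x ↦ x.val n) hz
  have hmono {m n : ℕ} (h : m ≤ n) : (I ^ n • ⊤ : Submodule R N) ≤ I ^ m • ⊤ :=
    Submodule.smul_mono_left (Ideal.pow_le_pow_right h)
  have hbsub {m n : ℕ} (h : m ≤ n) : b n - b m ∈ (I ^ m • ⊤ : Submodule R N) := by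
    rw [← Submodule.Quotient.eq]
    exact AdicCompletion.AdicCauchySequence.mk_eq_mk h _
  have hy (n : ℕ) : ∃ y, f y - b (n + c + d) ∈ (I ^ (n + c) • ⊤ : Submodule R N) := by
    obtain ⟨e, he, hge⟩ := hd (n + c) _ (hb (n + c + d))
    obtain ⟨y, hy⟩ := (hfg (b (n + c + d) - e)).mp (by rw [map_sub, hge, sub_self])
    exact ⟨y, by rw [hy]; simpa using he⟩
  choose y hy using hy
  have hδ (n : ℕ) : ∃ δ ∈ (I ^ n • ⊤ : Submodule R M), f δ = f (y (n + 1) - y n) := by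
    apply hc
    have : f (y (n + 1) - y n) = (f (y (n + 1)) - b (n + 1 + c + d))
        + (b (n + 1 + c + d) - b (n + c + d)) - (f (y n) - b (n + c + d)) := by
      rw [map_sub]; abel
    rw [this]
    exact sub_mem (add_mem (hmono (by lia) (hy (n + 1)))
      (hmono (by lia) (hbsub (show n + c + d ≤ n + 1 + c + d by lia)))) (hy n)
  choose δ hδ hδf using hδ
  -- The `y n` need not be Cauchy; the partial sums of the corrected differences `δ` are, and
  -- they have the same images under `f`.
  let w : ℕ → M := fun n ↦ y 0 + ∑ i ∈ Finset.range n, δ i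
  have hw (n : ℕ) : f (w n) = f (y n) := by
    simp only [w, map_add, map_sum, hδf]
    rw [Finset.sum_congr rfl fun i _ ↦ map_sub f (y (i + 1)) (y i),
      Finset.sum_range_sub (fun i ↦ f (y i))]
    abel
  refine ⟨AdicCompletion.mk I M (AdicCompletion.AdicCauchySequence.mk I M w fun n ↦ ?_), ?_⟩
  · refine SModEq.symm ?_
    rw [SModEq.sub_mem]
    simpa [w, Finset.sum_range_succ] using hδ n
  · ext n
    suffices h : f (w n) - b n ∈ (I ^ n • ⊤ : Submodule R N) by
      simpa using (Submodule.Quotient.eq _).mpr h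
    have : f (w n) - b n = (f (y n) - b (n + c + d)) + (b (n + c + d) - b n) := by
      rw [hw]; abel
    rw [this]
    exact add_mem (hmono (by lia) (hy n)) (hbsub (by lia))

lemma adicCompletion_map_sum_smul {R : Type*} [CommRing R] (I : Ideal R)
    {M N ι : Type*} [AddCommGroup M] [Module R M] [AddCommGroup N] [Module R N]
    (s : Finset ι) (a : ι → R) (g : ι → M →ₗ[R] N) (x : AdicCompletion I M) :
    AdicCompletion.map I (∑ j ∈ s, a j • g j) x = ∑ j ∈ s, a j • AdicCompletion.map I (g j) x := by
  obtain ⟨b, rfl⟩ := AdicCompletion.mk_surjective I M x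
  ext n
  simp only [AdicCompletion.map_mk, AdicCompletion.val_sum_apply, AdicCompletion.val_smul_apply,
    AdicCompletion.mk_apply_coe, AdicCompletion.AdicCauchySequence.map_apply_coe,
    LinearMap.sum_apply, LinearMap.smul_apply, map_sum, map_smul]

lemma adicCompletion_map_smul {R : Type*} [CommRing R] (I : Ideal R)
    {M N : Type*} [AddCommGroup M] [Module R M] [AddCommGroup N] [Module R N]
    (a : R) (g : M →ₗ[R] N) (x : AdicCompletion I M) :
    AdicCompletion.map I (a • g) x = a • AdicCompletion.map I g x := by
  simpa using adicCompletion_map_sum_smul I (Finset.univ : Finset Unit) (fun _ ↦ a) (fun _ ↦ g) x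

/-- Over a Noetherian ring, the `I`-adic completion of a flat module is flat; the base ring need
not be complete. -/
lemma adicCompletion_flat {R : Type*} [CommRing R] [IsNoetherianRing R] (I : Ideal R)
    (M : Type*) [AddCommGroup M] [Module R M] [Module.Flat R M] :
    Module.Flat R (AdicCompletion I M) := by
  refine Module.Flat.of_forall_isTrivialRelation fun {l φ x} hx ↦ ?_
  let Φ : (Fin l → R) →ₗ[R] R := Fintype.linearCombination R φ
  obtain ⟨k, g, hg⟩ := Submodule.fg_iff_exists_fin_generating_family.mp
    (IsNoetherian.noetherian (ker Φ))
  let A : (Fin k → R) →ₗ[R] (Fin l → R) := Fintype.linearCombination R g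
  have hAΦ : Function.Exact A Φ := by
    rw [LinearMap.exact_iff, ← hg, Fintype.range_linearCombination]
  -- The coordinate inclusions and projections of `M ⊗ R ^ n ≃ M ^ n`.
  let ι (n : ℕ) (j : Fin n) : M →ₗ[R] M ⊗[R] (Fin n → R) :=
    (TensorProduct.mk R M (Fin n → R)).flip (Pi.single j 1)
  let π (n : ℕ) (j : Fin n) : M ⊗[R] (Fin n → R) →ₗ[R] M :=
    (TensorProduct.rid R M).toLinearMap ∘ₗ (LinearMap.proj j).lTensor M
  have hπι (n : ℕ) (i j : Fin n) :
      π n i ∘ₗ ι n j = (if i = j then (1 : R) else 0) • LinearMap.id := by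
    ext m
    by_cases h : i = j <;> simp [π, ι, h]
  have hιπ (n : ℕ) : ∑ j, (1 : R) • (ι n j ∘ₗ π n j) = LinearMap.id := by
    ext m i
    simp only [π, ι, one_smul, AlgebraTensorModule.curry_apply, curry_apply,
      LinearMap.coe_restrictScalars, LinearMap.coe_comp, Function.comp_apply, LinearMap.sum_apply,
      LinearEquiv.coe_coe, lTensor_tmul, TensorProduct.rid_tmul, flip_apply, mk_apply,
      LinearMap.coe_proj, Function.eval, LinearMap.single_apply, LinearMap.id_apply,
      smul_tmul, ← tmul_sum]
    simp [Pi.single_apply]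
  have hπA (i : Fin l) (j : Fin k) : π l i ∘ₗ A.lTensor M ∘ₗ ι k j = g j i • LinearMap.id := by
    ext m
    simp [π, ι, A]
  have hΦι (i : Fin l) : Φ.lTensor M ∘ₗ ι l i =
      φ i • (TensorProduct.mk R M R).flip 1 := by
    ext m
    simp [ι, Φ, ← tmul_smul]
  -- `z` is the element of the completion of `M ⊗ R ^ l` with coordinates `x i`.
  let z := ∑ i, AdicCompletion.map I (ι l i) (x i)
  have hz : AdicCompletion.map I (Φ.lTensor M) z = 0 := by
    have h := congrArg (AdicCompletion.map I ((TensorProduct.mk R M R).flip 1)) hx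
    rw [map_sum, map_zero] at h
    rw [map_sum, ← h]
    refine Finset.sum_congr rfl fun i _ ↦ ?_
    rw [AdicCompletion.map_comp_apply, hΦι, adicCompletion_map_smul, LinearMap.map_smul_of_tower]
  obtain ⟨w, hw⟩ := map_exact_of_artinRees I (Module.Flat.lTensor_exact M hAΦ)
    (exists_artinRees_lTensor I M A) (exists_artinRees_lTensor I M Φ) z hz
  refine ⟨k, fun i j ↦ g j i, fun j ↦ AdicCompletion.map I (π k j) w, fun i ↦ ?_, fun j ↦ ?_⟩
  · have h1 : AdicCompletion.map I (π l i) z = x i := by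
      simp only [z, map_sum, AdicCompletion.map_comp_apply, hπι, adicCompletion_map_smul,
        AdicCompletion.map_id]
      simp only [LinearMap.id_apply, ite_smul, one_smul, zero_smul, Finset.sum_ite_eq, Finset.mem_univ,
        if_true]
    have h2 : w = ∑ j, AdicCompletion.map I (ι k j) (AdicCompletion.map I (π k j) w) := by
      have h := adicCompletion_map_sum_smul I Finset.univ (fun _ ↦ (1 : R))
        (fun j ↦ ι k j ∘ₗ π k j) w
      rw [hιπ, AdicCompletion.map_id, LinearMap.id_apply] at h
      simpa only [one_smul, AdicCompletion.map_comp_apply] using h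
    rw [← h1, ← hw]
    conv_lhs => rw [h2]
    rw [map_sum, map_sum]
    refine Finset.sum_congr rfl fun j _ ↦ ?_
    rw [AdicCompletion.map_comp_apply I (ι k j), AdicCompletion.map_comp_apply, hπA, adicCompletion_map_smul,
      AdicCompletion.map_id, LinearMap.id_apply]
  · have h : g j ∈ ker Φ := hg ▸ Submodule.subset_span ⟨j, rfl⟩
    simpa [Φ, Fintype.linearCombination_apply, mul_comm] using h

/-- Let `R` be a commutative Noetherian ring, `I`-adically complete and separated for an
ideal `I`, and let `M` be a flat `R`-module.  Then the `I`-adic completion of `M` is a flat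
`R`-module; moreover if `M` is faithfully flat over `R`, then so is its completion. -/
theorem adicCompletion_flat_of_flat
    (R : Type*) [CommRing R] [IsNoetherianRing R] (I : Ideal R) [IsAdicComplete I R]
    (M : Type*) [AddCommGroup M] [Module R M] (hM : Module.Flat R M) :
    Module.Flat R (AdicCompletion I M) ∧
      (Module.FaithfullyFlat R M → Module.FaithfullyFlat R (AdicCompletion I M)) := by
  have hflat := adicCompletion_flat I M
  refine ⟨hflat, fun hff ↦ { hflat with submodule_ne_top := fun m hm htop ↦ ?_ }⟩
  have hIm : I ≤ m := (IsAdicComplete.le_jacobson_bot I).trans (sInf_le ⟨bot_le, hm⟩)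
  apply hff.submodule_ne_top hm
  have hle : (I ^ 1 • ⊤ : Submodule R M) ≤ m • ⊤ := by
    rw [pow_one]
    exact Submodule.smul_mono_left hIm
  -- The surjection `M̂ → M / I M → M / m M`.
  let p := Submodule.factor hle ∘ₗ AdicCompletion.eval I M 1
  have hp : Function.Surjective p :=
    (Submodule.factor_surjective hle).comp (AdicCompletion.eval_surjective I M 1)
  have hker : m • (⊤ : Submodule R (AdicCompletion I M)) ≤ ker p := by
    rw [Submodule.smul_le]
    intro r hr t _
    obtain ⟨v, hv⟩ := Submodule.mkQ_surjective _ (p t)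
    rw [LinearMap.mem_ker, map_smul, ← hv, ← map_smul, Submodule.mkQ_apply,
      Submodule.Quotient.mk_eq_zero]
    exact Submodule.smul_mem_smul hr trivial
  rw [htop] at hker
  refine eq_top_iff.mpr fun v _ ↦ ?_
  obtain ⟨t, ht⟩ := hp (Submodule.Quotient.mk v)
  rw [← Submodule.Quotient.mk_eq_zero, ← ht]
  exact hker trivial
end

section
/- Let R be a commutative Noetherian ring and I ⊆ R an ideal such that R is I-adically complete and separated. If 0 → M' → M → M'' → 0 is a short exact sequence of R-modules in which M', M, and M'' are all flat over R, then the induced sequence of I-adic completions 0 → M̂' → M̂ → M̂'' → 0 is exact. -/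
/-!
Flatness of `M''` is what makes the sequence stay exact modulo every ideal `J`: by the equational
criterion for flatness, `J M ∩ f(M') = f(J M')` (`mem_smul_top_of_map_mem_smul_top`). Hence
`0 → M' / J M' → M / J M → M'' / J M'' → 0` is exact for `J = I ^ n`. Injectivity and exactness in
the middle then pass to the inverse limit over `n`, since preimages under injective maps are unique
and so automatically form a compatible family. Surjectivity of the completed map holds for every
surjection of modules (`AdicCompletion.map_surjective`).
-/

/-- The submodule `f(M')` of `M` is pure with respect to ideals when the quotient `M''` is flat.
If `f x = ∑ aᵢ mᵢ` with `aᵢ ∈ J`, then `∑ aᵢ g(mᵢ) = 0` is a trivial relation in `M''`; lifting a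
witness of triviality to `M` corrects the `mᵢ` to elements of `f(M')` without changing the sum. -/
theorem mem_smul_top_of_map_mem_smul_top
    {R : Type*} [CommRing R] (J : Ideal R)
    {M' M M'' : Type*} [AddCommGroup M'] [Module R M'] [AddCommGroup M] [Module R M]
    [AddCommGroup M''] [Module R M''] [Module.Flat R M'']
    {f : M' →ₗ[R] M} {g : M →ₗ[R] M''}
    (hf : Function.Injective f) (hg : Function.Surjective g) (hfg : Function.Exact f g)
    {x : M'} (hx : f x ∈ (J • ⊤ : Submodule R M)) : x ∈ (J • ⊤ : Submodule R M') := by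
  have htop : (⊤ : Submodule R M) = Submodule.span R (Set.range (id : M → M)) := by simp
  rw [htop, Submodule.mem_ideal_smul_span_iff_exists_sum] at hx
  obtain ⟨a, ha, hsum⟩ := hx
  have hsum' : ∑ i : a.support, a i • (i : M) = f x := by
    rw [← hsum]
    exact Finset.sum_coe_sort a.support fun i ↦ a i • i
  have hrel : ∑ i : a.support, a i • g (i : M) = 0 := by
    have := congrArg g hsum'
    rwa [hfg.apply_apply_eq_zero, map_sum, Finset.sum_congr rfl fun i _ ↦ map_smul g _ _] at this
  obtain ⟨k, b, y, hy, hb⟩ := Module.Flat.isTrivialRelation_of_sum_smul_eq_zero hrel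
  choose z hz using fun j ↦ hg (y j)
  have hw (i : a.support) : ∃ w, f w = (i : M) - ∑ j, b i j • z j := by
    refine (hfg _).mp ?_
    simp [hz, hy i]
  choose w hw using hw
  have hcorr : ∑ i : a.support, a i • ∑ j, b i j • z j = 0 := by
    simp_rw [Finset.smul_sum, smul_smul]
    rw [Finset.sum_comm]
    simp_rw [← Finset.sum_smul, hb, zero_smul, Finset.sum_const_zero]
  have hxw : x = ∑ i : a.support, a i • w i := by
    apply hf
    simp only [map_sum, map_smul, hw, smul_sub, Finset.sum_sub_distrib, hcorr, hsum', sub_zero]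
  rw [hxw]
  exact Submodule.sum_mem _ fun i _ ↦ Submodule.smul_mem_smul (ha i) trivial

theorem reduceModIdeal_injective_of_flat
    {R : Type*} [CommRing R] (J : Ideal R)
    {M' M M'' : Type*} [AddCommGroup M'] [Module R M'] [AddCommGroup M] [Module R M]
    [AddCommGroup M''] [Module R M''] [Module.Flat R M'']
    {f : M' →ₗ[R] M} {g : M →ₗ[R] M''}
    (hf : Function.Injective f) (hg : Function.Surjective g) (hfg : Function.Exact f g) :
    Function.Injective (f.reduceModIdeal J) := by
  rw [injective_iff_map_eq_zero]
  intro x hx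
  obtain ⟨x, rfl⟩ := Submodule.Quotient.mk_surjective _ x
  rw [LinearMap.reduceModIdeal_apply, Submodule.Quotient.mk_eq_zero] at hx
  rw [Submodule.Quotient.mk_eq_zero]
  exact mem_smul_top_of_map_mem_smul_top J hf hg hfg hx

/-- The part of the exactness modulo `J` that is right exactness of `- ⊗ R / J`. -/
theorem exists_reduceModIdeal_eq
    {R : Type*} [CommRing R] (J : Ideal R)
    {M' M M'' : Type*} [AddCommGroup M'] [Module R M'] [AddCommGroup M] [Module R M]
    [AddCommGroup M''] [Module R M'']
    {f : M' →ₗ[R] M} {g : M →ₗ[R] M''}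
    (hg : Function.Surjective g) (hfg : Function.Exact f g)
    (y : M ⧸ (J • ⊤ : Submodule R M)) (hy : g.reduceModIdeal J y = 0) :
    ∃ x, f.reduceModIdeal J x = y := by
  obtain ⟨y, rfl⟩ := Submodule.Quotient.mk_surjective _ y
  rw [LinearMap.reduceModIdeal_apply, Submodule.Quotient.mk_eq_zero,
    ← LinearMap.range_eq_top.mpr hg, ← Submodule.map_top, ← Submodule.map_smul''] at hy
  obtain ⟨d, hd, hdy⟩ := hy
  obtain ⟨x, hx⟩ := (hfg (y - d)).mp (by simp [hdy])
  refine ⟨Submodule.Quotient.mk x, ?_⟩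
  rw [LinearMap.reduceModIdeal_apply, hx, Submodule.Quotient.eq]
  simpa using hd

/-- Let `R` be a commutative Noetherian ring, `I`-adically complete and separated for an
ideal `I`.  If `0 → M' → M → M'' → 0` is a short exact sequence of flat `R`-modules, then
the induced sequence of `I`-adic completions `0 → M̂' → M̂ → M̂'' → 0` is exact. -/
theorem adicCompletion_preserves_ses_of_flat
    (R : Type*) [CommRing R] [IsNoetherianRing R] (I : Ideal R) [IsAdicComplete I R]
    (M' M M'' : Type*) [AddCommGroup M'] [Module R M'] [AddCommGroup M] [Module R M]
    [AddCommGroup M''] [Module R M'']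
    (hM' : Module.Flat R M') (hM : Module.Flat R M) (hM'' : Module.Flat R M'')
    (f : M' →ₗ[R] M) (g : M →ₗ[R] M'')
    (hf : Function.Injective f) (hg : Function.Surjective g)
    (hfg : Function.Exact f g) :
    Function.Injective (AdicCompletion.map I f) ∧
      Function.Exact (AdicCompletion.map I f) (AdicCompletion.map I g) ∧
      Function.Surjective (AdicCompletion.map I g) := by
  have hinj (n : ℕ) := reduceModIdeal_injective_of_flat (I ^ n) hf hg hfg
  refine ⟨fun x y hxy ↦ ?_, fun y ↦ ⟨fun hy ↦ ?_, ?_⟩, AdicCompletion.map_surjective I hg⟩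
  · refine AdicCompletion.ext fun n ↦ hinj n ?_
    simpa only [AdicCompletion.map_val_apply] using congrArg (fun z ↦ z.val n) hxy
  · have hy' (n : ℕ) : g.reduceModIdeal (I ^ n) (y.val n) = 0 := congrArg (fun z ↦ z.val n) hy
    choose x hx using fun n ↦ exists_reduceModIdeal_eq (I ^ n) hg hfg (y.val n) (hy' n)
    refine ⟨⟨x, fun {m n} hmn ↦ hinj m ?_⟩, AdicCompletion.ext hx⟩
    -- Compatibility of the preimages can be tested in `M / I ^ m M`, where it holds for `y`.
    have hcomm := LinearMap.congr_fun
      (AdicCompletion.transitionMap_comp_reduceModIdeal I f hmn) (x n)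
    refine hcomm.symm.trans ?_
    rw [hx m, ← y.prop hmn, ← hx n]
    rfl
  · rintro ⟨x, rfl⟩
    rw [AdicCompletion.map_comp_apply, hfg.linearMap_comp_eq_zero, AdicCompletion.map_zero,
      LinearMap.zero_apply]
end

section
/- With notation as in the context: the localization L = A[1/p] is a Noetherian Jacobson ring, and for every maximal ideal m of L the residue field L/m, regarded as a ℚ_p-algebra via the canonical homomorphism from ℚ_p induced by the ℤ_p-algebra structure (p being invertible in L/m), is a finite-dimensional ℚ_p-vector space. -/
/-!
Write `R' = R[1/p]`, so that `L = A[1/p]` is an `R'`-algebra of finite type. Noetherianness is the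
Hilbert basis theorem followed by localization.

The other two claims reduce to `R'`: by the general Nullstellensatz, an algebra of finite type over
a Jacobson ring is Jacobson, and its residue fields at maximal ideals are finite over the residue
fields of the base at maximal ideals.

For `R'` both claims rest on one consequence of Krull's principal ideal theorem and prime avoidance:
if `q` is a prime of the Noetherian local ring `R` and some `g ∉ q` lies in every prime strictly
above `q`, then every prime strictly above `q` is the maximal ideal (`eq_maximalIdeal_of_lt`).

* Given a prime `P` of `R'` and `r ∈ R` with image outside `P`, a prime `q` of `R` maximal among
  those containing the contraction of `P` and avoiding `p * r` therefore becomes a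
  maximal ideal of `R'` above `P` not containing `r`. So `R'` is Jacobson (`isJacobsonRing_away`).
* A maximal ideal of `R'` contracts to a prime `q` of `R` such that every prime strictly above `q`
  contains `p`. Then `R ⧸ (q, p)` is a quotient of `R ⧸ m_R ^ k` for some `k`, hence finite. As
  `R ⧸ q` is `p`-adically separated and `ℤ_p` is `p`-adically complete, `R ⧸ q` is a finite
  `ℤ_p`-module (`finite_padicInt_quotient`), and inverting `p` gives a finite-dimensional
  `ℚ_p`-vector space (`finite_padic_residue`).
-/

open IsLocalRing

/-- A Noetherian local domain in which a nonzero element `g` lies in every nonzero prime has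
dimension at most one. By Krull's principal ideal theorem every element of the maximal ideal lies
in a prime of height at most one, hence in one of the finitely many minimal primes over `g`;
prime avoidance then makes the maximal ideal itself one of these. -/
lemma eq_maximalIdeal_of_isDomain {E : Type*} [CommRing E] [IsDomain E] [IsNoetherianRing E]
    [IsLocalRing E] {g : E} (hg0 : g ≠ 0) (hg : ∀ P : Ideal E, P.IsPrime → P ≠ ⊥ → g ∈ P)
    {P : Ideal E} (hP : P.IsPrime) (hP0 : P ≠ ⊥) : P = maximalIdeal E := by
  classical
  have hgP := hg P hP hP0
  have hfin := (Ideal.span {g}).finite_minimalPrimes_of_isNoetherianRing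
  have key : ((maximalIdeal E : Ideal E) : Set E) ⊆
      ⋃ i ∈ (↑hfin.toFinset : Set (Ideal E)), ((id i : Ideal E) : Set E) := by
    intro x hx
    simp only [Set.Finite.coe_toFinset, Set.mem_iUnion, id]
    by_cases hx0 : x = 0
    · obtain ⟨Q, hQ, -⟩ := Ideal.exists_minimalPrimes_le
        ((Ideal.span_singleton_le_iff_mem P).2 hgP)
      exact ⟨Q, hQ, by simp [hx0]⟩
    obtain ⟨Q, hQ, -⟩ := Ideal.exists_minimalPrimes_le
        ((Ideal.span_singleton_le_iff_mem (maximalIdeal E)).2 hx)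
    have hQp := hQ.isPrime
    have hxQ : x ∈ Q := (Ideal.span_singleton_le_iff_mem Q).1 hQ.le
    have hQ0 : Q ≠ ⊥ := by rintro rfl; exact hx0 (by simpa using hxQ)
    have ht := Ideal.height_le_one_of_isPrincipal_of_mem_minimalPrimes _ Q hQ
    obtain ⟨Q', hQ', hle⟩ := Ideal.exists_minimalPrimes_le
        ((Ideal.span_singleton_le_iff_mem Q).2 (hg Q hQp hQ0))
    have hQ'p := hQ'.isPrime
    have hgQ' : g ∈ Q' := (Ideal.span_singleton_le_iff_mem Q').1 hQ'.le
    rcases hle.eq_or_lt with rfl | hlt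
    · exact ⟨_, hQ', hxQ⟩
    -- Otherwise `⊥ < Q' < Q` is a chain of primes, against `Q` having height at most one.
    exfalso
    have hpos : (⊥ : Ideal E) < Q' := bot_lt_iff_ne_bot.2 (by
      rintro rfl; exact hg0 (by simpa using hgQ'))
    have h1 := Ideal.height_strict_mono_of_isPrime_of_isPrime hpos
    have h2 := Ideal.height_strict_mono_of_isPrime_of_isPrime hlt
    have h3 : Q'.height < 1 := h2.trans_le ht
    rw [Order.lt_one_iff] at h3
    simp [h3] at h1
  obtain ⟨Q, hQ, hmQ⟩ := (Ideal.subset_union_prime ⊥ ⊥ (by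
    intro i hi _ _
    exact ((hfin.mem_toFinset).1 hi).isPrime)).1 key
  have hQ : Q ∈ (Ideal.span {g}).minimalPrimes := by simpa using hQ
  have hQp := hQ.isPrime
  have hQm : Q = maximalIdeal E := le_antisymm (le_maximalIdeal hQp.ne_top) hmQ
  have hPQ : P ≤ Q := hQm ▸ le_maximalIdeal hP.ne_top
  rw [← hQm]
  exact le_antisymm hPQ (hQ.2 ⟨hP, (Ideal.span_singleton_le_iff_mem P).2 hgP⟩ hPQ)

/-- The statement of `eq_maximalIdeal_of_isDomain` for the domain `R ⧸ q`, in terms of the primes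
of `R` above `q`. -/
lemma eq_maximalIdeal_of_lt {R : Type*} [CommRing R] [IsNoetherianRing R] [IsLocalRing R]
    {q : Ideal R} [q.IsPrime] {g : R} (hg0 : g ∉ q)
    (hg : ∀ P : Ideal R, P.IsPrime → q < P → g ∈ P)
    {P : Ideal R} (hP : P.IsPrime) (hqP : q < P) : P = maximalIdeal R := by
  have hs : Function.Surjective (Ideal.Quotient.mk q) := Ideal.Quotient.mk_surjective
  have := IsLocalRing.of_surjective' _ hs
  have hmap : (P.map (Ideal.Quotient.mk q)).IsPrime :=
    Ideal.map_isPrime_of_surjective hs (by simpa using hqP.le)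
  have hcm : (P.map (Ideal.Quotient.mk q)).comap (Ideal.Quotient.mk q) = P := by
    rw [Ideal.comap_map_of_surjective' _ hs, Ideal.mk_ker, sup_eq_left.2 hqP.le]
  have h := eq_maximalIdeal_of_isDomain (E := R ⧸ q) (g := Ideal.Quotient.mk q g)
    (by rwa [Ne, Ideal.Quotient.eq_zero_iff_mem])
    (fun Q hQ hQ0 => by
      have := hg (Q.comap (Ideal.Quotient.mk q)) inferInstance (lt_of_le_of_ne (by
        intro x hx
        rw [Ideal.mem_comap, Ideal.Quotient.eq_zero_iff_mem.2 hx]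
        exact Q.zero_mem) (by
        intro he
        apply hQ0
        rw [← Ideal.map_comap_of_surjective _ hs Q, ← he, Ideal.map_quotient_self]))
      exact this) hmap (by
      intro h0
      rw [Ideal.map_eq_bot_iff_le_ker, Ideal.mk_ker] at h0
      exact absurd h0 hqP.not_ge)
  rw [← hcm, h]
  exact IsLocalRing.eq_maximalIdeal (Ideal.comap_isMaximal_of_surjective _ hs)

/-- Inverting an element of the maximal ideal of a Noetherian local ring gives a Jacobson ring:
the punctured spectrum of such a ring is a Jacobson space, and `Spec R[1/g]` is open in it. -/
lemma isJacobsonRing_away {R : Type*} [CommRing R] [IsNoetherianRing R] [IsLocalRing R]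
    {g : R} (hgm : g ∈ maximalIdeal R) : IsJacobsonRing (Localization.Away g) := by
  rw [isJacobsonRing_iff_prime_eq]
  intro P hP
  refine le_antisymm ?_ Ideal.le_jacobson
  intro y hy
  obtain ⟨n, r, hr⟩ := IsLocalization.Away.surj g y
  by_contra hyP
  have hu : IsUnit (algebraMap R (Localization.Away g) g ^ n) :=
    (IsLocalization.Away.algebraMap_isUnit g).pow n
  have hrP : algebraMap R (Localization.Away g) r ∉ P := by
    rw [← hr]; intro h
    exact hyP ((Ideal.mul_unit_mem_iff_mem P hu).1 h)
  have hgP : algebraMap R (Localization.Away g) g ∉ P := fun h =>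
    hP.ne_top (Ideal.eq_top_of_isUnit_mem _ h (IsLocalization.Away.algebraMap_isUnit g))
  -- A prime `q` of `R` maximal among those that contain the contraction of `P` and avoid `g * r`.
  -- Every prime strictly above `q` is the maximal ideal, so `q` corresponds to a
  -- maximal ideal of `R[1/g]`.
  obtain ⟨q, ⟨hq, hPq, hgr⟩, hmax⟩ := set_has_maximal_iff_noetherian.2 ‹IsNoetherianRing R›
    {q : Ideal R | q.IsPrime ∧ P.comap (algebraMap R (Localization.Away g)) ≤ q ∧ g * r ∉ q}
    ⟨P.comap (algebraMap R _), inferInstance, le_rfl, by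
      rw [Ideal.mem_comap, map_mul]
      exact fun h => (hP.mem_or_mem h).elim hgP hrP⟩
  have hK : ∀ Q : Ideal R, Q.IsPrime → q < Q → Q = maximalIdeal R := fun Q hQ hlt =>
    eq_maximalIdeal_of_lt hgr (fun Q' hQ' hlt' => by
      by_contra hn
      exact hmax Q' ⟨hQ', hPq.trans hlt'.le, hn⟩ hlt') hQ hlt
  have hgq : g ∉ q := fun h => hgr (Ideal.mul_mem_right _ q h)
  have hrq : r ∉ q := fun h => hgr (Ideal.mul_mem_left q _ h)
  have hdis : Disjoint (Submonoid.powers g : Set R) (q : Set R) := by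
    rw [Set.disjoint_left]
    rintro _ ⟨k, rfl⟩ h
    exact hgq (hq.mem_of_pow_mem _ h)
  have hn := IsLocalization.isPrime_of_isPrime_disjoint (Submonoid.powers g)
    (Localization.Away g) q hq hdis
  obtain ⟨n', hn', hle⟩ := Ideal.exists_le_maximal _ hn.ne_top
  have hqn : q = n'.comap (algebraMap R _) := by
    by_contra hne
    have h1 := hK (n'.comap (algebraMap R _)) inferInstance
      (lt_of_le_of_ne (Ideal.map_le_iff_le_comap.1 hle) hne)
    have h2 : g ∈ n'.comap (algebraMap R (Localization.Away g)) := h1 ▸ hgm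
    exact hn'.ne_top (Ideal.eq_top_of_isUnit_mem _ h2 (IsLocalization.Away.algebraMap_isUnit g))
  have hPn : P ≤ n' := by
    rw [← IsLocalization.map_under (Submonoid.powers g) _ P]
    exact Ideal.map_le_iff_le_comap.2 (hqn ▸ hPq)
  have hyn : y ∈ n' := (Ideal.mem_sInf.1 hy) ⟨hPn, hn'⟩
  apply hrq
  rw [hqn, Ideal.mem_comap, ← hr]
  exact n'.mul_mem_right _ hyn

open AdicCompletion in
lemma isPrecomplete_pi {R : Type*} [CommRing R] (I : Ideal R) [IsPrecomplete I R] (ι : Type*)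
    [Finite ι] :
    IsPrecomplete I (ι → R) := by
  classical
  have := Fintype.ofFinite ι
  rw [← of_surjective_iff]
  intro y
  choose x hx using fun j => of_surjective I R (AdicCompletion.pi I (fun _ : ι => R) y j)
  refine ⟨x, (piEquivOfFintype I (fun _ : ι => R)).injective ?_⟩
  rw [piEquivOfFintype_apply, piEquivOfFintype_apply]
  ext1 j
  rw [← hx j]
  exact AdicCompletion.ext fun n => rfl

open Submodule in
/-- Complete Nakayama: if `R` is `I`-adically precomplete and `M` is `I`-adically separated with
`M ⧸ I M` finite, then `M` is a finite `R`-module. -/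
lemma finite_of_finite_quotient {R : Type*} [CommRing R] (I : Ideal R) [IsPrecomplete I R]
    {M : Type*} [AddCommGroup M] [Module R M] [IsHausdorff I M] [Finite (M ⧸ (I • ⊤ : Submodule R M))] :
    Module.Finite R M := by
  have := isPrecomplete_pi I (M ⧸ (I • ⊤ : Submodule R M))
  have := Fintype.ofFinite (M ⧸ (I • ⊤ : Submodule R M))
  choose s hs using mkQ_surjective (I • ⊤ : Submodule R M)
  refine Module.Finite.of_surjective (Fintype.linearCombination R s)
    (surjective_of_mkQ_comp_surjective (I := I) fun y => ?_)
  classical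
  exact ⟨Pi.single y 1, by simpa [Fintype.linearCombination_apply_single] using hs y⟩

lemma isUnit_map_of_ne_zero {p : ℕ} [Fact p.Prime] {B : Type*} [CommRing B] (φ : ℤ_[p] →+* B)
    (h : IsUnit (p : B)) {x : ℤ_[p]} (hx : x ≠ 0) : IsUnit (φ x) := by
  rw [PadicInt.unitCoeff_spec hx, map_mul, map_pow, map_natCast]
  exact ((PadicInt.unitCoeff hx).isUnit.map φ).mul (h.pow _)

/-- If `p` were invertible in `R`, then so would be the image in the residue field of every nonzero
`p`-adic integer, in particular of the cardinality of that field. -/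
lemma natCast_prime_mem_maximalIdeal {p : ℕ} [Fact p.Prime] {R : Type*} [CommRing R]
    [IsLocalRing R] [Finite (ResidueField R)] [Algebra ℤ_[p] R] : (p : R) ∈ maximalIdeal R := by
  rw [mem_maximalIdeal]
  intro h
  have := Fintype.ofFinite (ResidueField R)
  have h2 := isUnit_map_of_ne_zero ((residue R).comp (algebraMap ℤ_[p] R))
    (by simpa using h.map (residue R)) (x := (Fintype.card (ResidueField R) : ℤ_[p]))
    (by exact_mod_cast Fintype.card_ne_zero)
  rw [map_natCast, Nat.cast_card_eq_zero] at h2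
  exact not_isUnit_zero h2

/-- If every prime strictly above `q` contains `p` while `q` does not, then `R ⧸ q` has dimension
one and `R ⧸ (q, p)` is finite, so `R ⧸ q` is a finite `ℤ_p`-module by complete Nakayama. -/
lemma finite_padicInt_quotient {p : ℕ} [Fact p.Prime] {R : Type*} [CommRing R] [IsNoetherianRing R]
    [IsLocalRing R] [Finite (ResidueField R)] [Algebra ℤ_[p] R] {q : Ideal R} [hq : q.IsPrime]
    (hK : ∀ Q : Ideal R, Q.IsPrime → q < Q → (p : R) ∈ Q) (hpq : (p : R) ∉ q) :
    Module.Finite ℤ_[p] (R ⧸ q) := by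
  have hs : Function.Surjective (Ideal.Quotient.mk q) := Ideal.Quotient.mk_surjective
  have hloc := IsLocalRing.of_surjective' _ hs
  have hpm : (p : R) ∈ maximalIdeal R := natCast_prime_mem_maximalIdeal
  have hI : (maximalIdeal ℤ_[p]).map (algebraMap ℤ_[p] (R ⧸ q)) =
      Ideal.span {(p : R ⧸ q)} := by
    rw [PadicInt.maximalIdeal_eq_span_p, Ideal.map_span, Set.image_singleton, map_natCast]
  have hH : IsHausdorff (maximalIdeal ℤ_[p]) (R ⧸ q) := by
    rw [← IsHausdorff.map_algebraMap_iff (S := R ⧸ q), hI]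
    refine IsHausdorff.of_isLocalRing _ _ fun h => ?_
    have hu : IsUnit (Ideal.Quotient.mk q (p : R)) := by
      simpa [Ideal.span_singleton_eq_top] using h
    have := hloc
    have : IsLocalHom (Ideal.Quotient.mk q) := IsLocalHom.of_surjective _ hs
    exact (mem_maximalIdeal _).1 hpm (isUnit_of_map_unit _ _ hu)
  -- All primes above `q + (p)` are equal to the maximal ideal.
  have hrad : maximalIdeal R ≤ (q ⊔ Ideal.span {(p : R)}).radical := by
    rw [Ideal.radical_eq_sInf]
    refine le_sInf ?_
    rintro Q ⟨hle, hQ⟩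
    have hpQ : (p : R) ∈ Q := hle (Ideal.mem_sup_right (Ideal.mem_span_singleton_self _))
    refine (eq_maximalIdeal_of_lt hpq hK hQ (lt_of_le_of_ne (le_sup_left.trans hle) ?_)).ge
    rintro rfl
    exact hpq hpQ
  obtain ⟨k, hk⟩ := Ideal.exists_pow_le_of_le_radical_of_fg hrad (IsNoetherian.noetherian _)
  have : Finite (R ⧸ maximalIdeal R) := ‹Finite (ResidueField R)›
  have := Ideal.finite_quotient_pow (IsNoetherian.noetherian (maximalIdeal R)) k
  have hfin : Finite ((R ⧸ q) ⧸ (maximalIdeal ℤ_[p] • ⊤ : Submodule ℤ_[p] (R ⧸ q))) := by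
    rw [Ideal.smul_top_eq_map, hI]
    refine @Finite.of_equiv _ _ ?_
      (Submodule.Quotient.restrictScalarsEquiv ℤ_[p] (Ideal.span {(p : R ⧸ q)})).symm.toEquiv
    refine Finite.of_surjective (α := R ⧸ maximalIdeal R ^ k)
      (Ideal.Quotient.lift (maximalIdeal R ^ k)
      ((Ideal.Quotient.mk (Ideal.span {(p : R ⧸ q)})).comp (Ideal.Quotient.mk q)) ?_) ?_
    · intro a ha
      have h1 := Ideal.mem_map_of_mem (Ideal.Quotient.mk q) (hk ha)
      rw [Ideal.map_sup, Ideal.map_quotient_self, bot_sup_eq, Ideal.map_span,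
        Set.image_singleton, map_natCast] at h1
      exact Ideal.Quotient.eq_zero_iff_mem.2 h1
    · exact Ideal.Quotient.lift_surjective_of_surjective _ _
        (Ideal.Quotient.mk_surjective.comp hs)
  exact finite_of_finite_quotient (maximalIdeal ℤ_[p])

/-- The residue fields of `R[1/p]` at maximal ideals are finite over `ℚ_p`. The residue field is
given as the target of a surjection `g` with maximal kernel; the contraction `q` of this kernel to
`R` is maximal among the primes not containing `p`, so `R ⧸ q` is finite over `ℤ_p`, and its
generators span the residue field over `ℚ_p`. -/
lemma finite_padic_residue {p : ℕ} [Fact p.Prime] {R : Type*} [CommRing R] [IsNoetherianRing R]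
    [IsLocalRing R] [Finite (ResidueField R)] [Algebra ℤ_[p] R] {K : Type*} [CommRing K]
    (f : ℚ_[p] →+* Localization.Away (p : R))
    (hf : f.comp (algebraMap ℤ_[p] ℚ_[p]) =
      (algebraMap R (Localization.Away (p : R))).comp (algebraMap ℤ_[p] R))
    (g : Localization.Away (p : R) →+* K) (hg : Function.Surjective g)
    (hker : (RingHom.ker g).IsMaximal) : (g.comp f).Finite := by
  classical
  obtain ⟨n, hng⟩ : ∃ n, n = RingHom.ker g := ⟨_, rfl⟩
  have hn : n.IsMaximal := hng ▸ hker
  set q := n.comap (algebraMap R (Localization.Away (p : R))) with hqdef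
  have hpu := IsLocalization.Away.algebraMap_isUnit (S := Localization.Away (p : R)) (p : R)
  have hpq : (p : R) ∉ q := fun h => hn.ne_top (Ideal.eq_top_of_isUnit_mem _ h hpu)
  have hK : ∀ Q : Ideal R, Q.IsPrime → q < Q → (p : R) ∈ Q := by
    intro Q hQ hlt
    by_contra hpQ
    have hdis : Disjoint (Submonoid.powers (p : R) : Set R) (Q : Set R) := by
      rw [Set.disjoint_left]
      rintro _ ⟨k, rfl⟩ h
      exact hpQ (hQ.mem_of_pow_mem _ h)
    have hQ' := IsLocalization.isPrime_of_isPrime_disjoint (Submonoid.powers (p : R))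
      (Localization.Away (p : R)) Q hQ hdis
    have hle : n ≤ Q.map (algebraMap R (Localization.Away (p : R))) := by
      rw [← IsLocalization.map_under (Submonoid.powers (p : R)) _ n]
      exact Ideal.map_mono hlt.le
    have heq := hn.eq_of_le hQ'.ne_top hle
    exact hlt.not_ge (by rw [hqdef, heq]; exact Ideal.le_comap_map)
  have hfin := finite_padicInt_quotient hK hpq
  obtain ⟨T, hT⟩ := hfin
  let ψ : (R ⧸ q) →+* K := Ideal.Quotient.lift q (g.comp (algebraMap R _)) fun a ha => by
    have : algebraMap R (Localization.Away (p : R)) a ∈ n := ha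
    rwa [hng] at this
  let : Algebra ℚ_[p] K := (g.comp f).toAlgebra
  let W : Submodule ℚ_[p] K := Submodule.span ℚ_[p] (Set.image ψ (T : Set (R ⧸ q)))
  have hW : ∀ x, ψ x ∈ W := fun x => by
    have hx : x ∈ Submodule.span ℤ_[p] (T : Set (R ⧸ q)) := hT ▸ Submodule.mem_top
    induction hx using Submodule.span_induction with
    | mem x hx => exact Submodule.subset_span ⟨x, hx, rfl⟩
    | zero => rw [map_zero]; exact W.zero_mem
    | add x y _ _ hx hy => rw [map_add]; exact W.add_mem hx hy
    | smul a x _ hx =>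
      have h1 : ψ (a • x) = (algebraMap ℤ_[p] ℚ_[p] a) • ψ x := by
        rw [Algebra.smul_def, Algebra.smul_def, map_mul]
        congr 1
        exact congrArg g (RingHom.congr_fun hf a).symm
      exact h1 ▸ W.smul_mem _ hx
  refine ⟨⟨T.image ψ, ?_⟩⟩
  rw [Finset.coe_image, eq_top_iff]
  rintro y -
  obtain ⟨z, rfl⟩ := hg y
  obtain ⟨k, r, hr⟩ := IsLocalization.Away.surj (p : R) z
  have hp0 : ((p : ℚ_[p]) ^ k) ≠ 0 :=
    pow_ne_zero _ (by exact_mod_cast (Fact.out : p.Prime).ne_zero)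
  have h2 : ((p : ℚ_[p]) ^ k) • g z = ψ (Ideal.Quotient.mk q r) := by
    change _ = g (algebraMap R _ r)
    rw [← hr, Algebra.smul_def, map_mul, mul_comm]
    simp
  have h3 := W.smul_mem ((p : ℚ_[p]) ^ k)⁻¹ (hW (Ideal.Quotient.mk q r))
  rwa [← h2, smul_smul, inv_mul_cancel₀ hp0, one_smul] at h3

/-- Let `R` be a commutative Noetherian local `ℤ_p`-algebra with finite residue field,
complete and separated with respect to its maximal-ideal-adic topology, let `A` be a
finitely generated `R`-algebra, and let `L = A[1/p]`.  Then `L` is a Noetherian Jacobson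
ring, and for every maximal ideal `m` of `L` the residue field `L/m`, regarded as a
`ℚ_p`-algebra via the canonical homomorphism extending the `ℤ_p`-algebra structure, is a
finite-dimensional `ℚ_p`-vector space. -/
theorem invertP_jacobson_noetherian_and_finite_residue
    (p : ℕ) [Fact p.Prime]
    (R : Type*) [CommRing R] [IsNoetherianRing R] [IsLocalRing R]
    [Finite (IsLocalRing.ResidueField R)] [Algebra ℤ_[p] R]
    [IsAdicComplete (IsLocalRing.maximalIdeal R) R]
    (A : Type*) [CommRing A] [Algebra R A] [Algebra.FiniteType R A]
    [Algebra ℤ_[p] A] [IsScalarTower ℤ_[p] R A] :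
    IsNoetherianRing (Localization.Away (p : A)) ∧
    IsJacobsonRing (Localization.Away (p : A)) ∧
    ∀ m : Ideal (Localization.Away (p : A)), m.IsMaximal →
      ∃ f : ℚ_[p] →+* Localization.Away (p : A) ⧸ m,
        f.comp (algebraMap ℤ_[p] ℚ_[p]) =
          (Ideal.Quotient.mk m).comp
            ((algebraMap A (Localization.Away (p : A))).comp (algebraMap ℤ_[p] A)) ∧
        (letI : Algebra ℚ_[p] (Localization.Away (p : A) ⧸ m) := f.toAlgebra
         FiniteDimensional ℚ_[p] (Localization.Away (p : A) ⧸ m)) := by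
  have hpm : (p : R) ∈ maximalIdeal R := natCast_prime_mem_maximalIdeal
  have hA : IsNoetherianRing A := Algebra.FiniteType.isNoetherianRing R A
  have hJ : IsJacobsonRing (Localization.Away (p : R)) := isJacobsonRing_away hpm
  have hpR : IsUnit ((p : ℕ) : Localization.Away (p : R)) := by
    simpa using IsLocalization.Away.algebraMap_isUnit (S := Localization.Away (p : R)) (p : R)
  have hpL : IsUnit (algebraMap R (Localization.Away (p : A)) (p : R)) := by
    simpa using IsLocalization.Away.algebraMap_isUnit (S := Localization.Away (p : A)) (p : A)
  let : Algebra (Localization.Away (p : R)) (Localization.Away (p : A)) :=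
    (IsLocalization.Away.lift (p : R) hpL).toAlgebra
  have : IsScalarTower R (Localization.Away (p : R)) (Localization.Away (p : A)) :=
    .of_algebraMap_eq' (IsLocalization.Away.lift_comp (p : R) hpL).symm
  let f₀ : ℚ_[p] →+* Localization.Away (p : R) :=
    IsLocalization.lift (M := nonZeroDivisors ℤ_[p])
      (g := algebraMap ℤ_[p] (Localization.Away (p : R)))
      fun x => isUnit_map_of_ne_zero _ hpR (nonZeroDivisors.ne_zero x.2)
  have hf₀ : f₀.comp (algebraMap ℤ_[p] ℚ_[p]) = algebraMap ℤ_[p] (Localization.Away (p : R)) :=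
    IsLocalization.lift_comp _
  have : Algebra.FiniteType A (Localization.Away (p : A)) :=
    IsLocalization.finiteType_of_monoid_fg (Submonoid.powers (p : A)) _
  have hft : Algebra.FiniteType R (Localization.Away (p : A)) :=
    Algebra.FiniteType.trans (S := A) inferInstance inferInstance
  have hft' : Algebra.FiniteType (Localization.Away (p : R)) (Localization.Away (p : A)) :=
    Algebra.FiniteType.of_restrictScalars_finiteType R _ _
  refine ⟨IsLocalization.isNoetherianRing (Submonoid.powers (p : A)) _ hA,
    isJacobsonRing_of_finiteType (A := Localization.Away (p : R)), fun m hm => ?_⟩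
  let g : Localization.Away (p : R) →+* Localization.Away (p : A) ⧸ m :=
    (Ideal.Quotient.mk m).comp (algebraMap _ _)
  refine ⟨g.comp f₀, ?_, ?_⟩
  · rw [RingHom.comp_assoc, hf₀]
    ext x
    change Ideal.Quotient.mk m (algebraMap (Localization.Away (p : R)) (Localization.Away (p : A))
      (algebraMap ℤ_[p] (Localization.Away (p : R)) x)) = _
    rw [IsScalarTower.algebraMap_apply ℤ_[p] R (Localization.Away (p : R)),
      ← IsScalarTower.algebraMap_apply R (Localization.Away (p : R)),
      IsScalarTower.algebraMap_apply R A, ← IsScalarTower.algebraMap_apply ℤ_[p] R A]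
    rfl
  change (g.comp f₀).Finite
  let : Field (Localization.Away (p : A) ⧸ m) := Ideal.Quotient.field m
  have hg : g.Finite := RingHom.finite_iff_finiteType_of_isJacobsonRing.2
    ((RingHom.FiniteType.of_surjective _ Ideal.Quotient.mk_surjective).comp
      (RingHom.finiteType_algebraMap.2 hft'))
  -- `g` is integral and `⊥` is maximal in the field `L/m`, so its contraction is maximal.
  have hn : (RingHom.ker g).IsMaximal :=
    Ideal.isMaximal_comap_of_isIntegral_of_isMaximal' g hg.to_isIntegral ⊥
  have hlift : (RingHom.kerLift g).comp (Ideal.Quotient.mk (RingHom.ker g)) = g := by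
    ext x
    exact RingHom.kerLift_mk g x
  have h1 : (RingHom.kerLift g).Finite := RingHom.Finite.of_comp_finite (hlift.symm ▸ hg)
  have h2 := h1.comp (finite_padic_residue f₀ hf₀ (Ideal.Quotient.mk (RingHom.ker g))
    Ideal.Quotient.mk_surjective (by rwa [Ideal.mk_ker]))
  rwa [← RingHom.comp_assoc, hlift] at h2
end

section
/- With notation as in the context: a finitely generated L-module V, where L = A[1/p], is projective if and only if for every finite ℚ_p-algebra B and every ring homomorphism f : L → B, the base change V ⊗_L B (with B regarded as an L-algebra via f) is a projective B-module. -/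
/-!
Base change preserves projectivity, so the content is the converse. It rests on two facts.

* The residue field of `L` at every maximal ideal is finite over `ℚ_p`
  (`ZariskiPadic.finite_of_finiteType_field`). It is a field `K` of finite type over `R` in which
  `p ≠ 0`. If `R'` denotes the image of `R` in `K`, then the existence of a field of finite type
  containing the Noetherian local domain `R'` forces `dim R' ≤ 1`. Hence `R' / pR'` is a finite ring,
  and `R'` is finite over `ℤ_p` by Nakayama's lemma in its topological form. So `K` is of finite type
  over `ℚ_p`, and Zariski's lemma concludes.

* A finite module over a Noetherian local ring `(S, m)` is free if its reductions modulo all `m ^ n`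
  are projective (`ZariskiPadic.free_of_projective_quotients`).

By the first fact, for every maximal ideal of `L`, with local ring `(S, m)`, the quotients `S / m ^ n`
are finite `ℚ_p`-algebras, so the hypothesis applies to them. By the second, all localizations of `V`
at maximal ideals are then free, and `V`, being finitely presented, is projective.
-/

open scoped TensorProduct

/-! ### Finiteness over the `p`-adic integers -/

theorem ZariskiPadic.isPrecomplete_pi (p : ℕ) [Fact p.Prime] (n : ℕ) :
    IsPrecomplete (IsLocalRing.maximalIdeal ℤ_[p]) (Fin n → ℤ_[p]) where
  prec' x hx := by
    have mem : ∀ (m : ℕ) (y : Fin n → ℤ_[p]),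
        y ∈ (IsLocalRing.maximalIdeal ℤ_[p] ^ m • ⊤ : Submodule ℤ_[p] (Fin n → ℤ_[p])) ↔
        ∀ i, y i ∈ (IsLocalRing.maximalIdeal ℤ_[p] ^ m • ⊤ : Submodule ℤ_[p] ℤ_[p]) := by
      intro m y
      simp only [PadicInt.maximalIdeal_eq_span_p, Ideal.span_singleton_pow,
        Submodule.ideal_span_singleton_smul, Submodule.mem_smul_pointwise_iff_exists,
        Submodule.mem_top, true_and]
      refine ⟨?_, fun h => ?_⟩
      · rintro ⟨z, rfl⟩ i
        exact ⟨z i, rfl⟩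
      · choose z hz using h
        exact ⟨z, funext hz⟩
    have hc : ∀ i, ∃ L : ℤ_[p], ∀ m, x m i ≡ L
        [SMOD (IsLocalRing.maximalIdeal ℤ_[p] ^ m • ⊤ : Submodule ℤ_[p] ℤ_[p])] := by
      intro i
      refine IsPrecomplete.prec inferInstance fun {m k} hmk => ?_
      have := hx hmk
      rw [SModEq.sub_mem, mem] at this
      rw [SModEq.sub_mem]
      exact this i
    choose L hL using hc
    refine ⟨L, fun m => ?_⟩
    rw [SModEq.sub_mem, mem]
    intro i
    exact SModEq.sub_mem.mp (hL i m)

/-- Topological Nakayama over `ℤ_p`: a `p`-adically separated module that is finitely generated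
modulo `p` is finitely generated. Only `ℤ_p` has to be complete; `M` need not be. -/
theorem ZariskiPadic.finite_of_isHausdorff (p : ℕ) [Fact p.Prime] (M : Type*) [AddCommGroup M]
    [Module ℤ_[p] M] [IsHausdorff (IsLocalRing.maximalIdeal ℤ_[p]) M]
    [Module.Finite ℤ_[p] (M ⧸ (IsLocalRing.maximalIdeal ℤ_[p] • ⊤ : Submodule ℤ_[p] M))] :
    Module.Finite ℤ_[p] M := by
  obtain ⟨n, g, hg⟩ := Module.Finite.exists_fin' ℤ_[p]
    (M ⧸ (IsLocalRing.maximalIdeal ℤ_[p] • ⊤ : Submodule ℤ_[p] M))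
  obtain ⟨f, hf⟩ := Module.projective_lifting_property
    (Submodule.mkQ (IsLocalRing.maximalIdeal ℤ_[p] • ⊤ : Submodule ℤ_[p] M)) g
    (Submodule.mkQ_surjective _)
  have := isPrecomplete_pi p n
  exact .of_surjective f (surjective_of_mkQ_comp_surjective
    (I := IsLocalRing.maximalIdeal ℤ_[p]) (f := f) (by rw [hf]; exact hg))

/-- A Noetherian local `ℤ_p`-algebra with finite residue field is finite over `ℤ_p` as soon as
`R / pR` has dimension zero: then `R / pR` is a finite ring, and `R` is `p`-adically separated by
Krull's intersection theorem. -/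
theorem ZariskiPadic.finite_padicInt (p : ℕ) [Fact p.Prime] (R : Type*) [CommRing R]
    [IsNoetherianRing R] [IsLocalRing R] [Finite (IsLocalRing.ResidueField R)] [Algebra ℤ_[p] R]
    (hp : (p : R) ∈ IsLocalRing.maximalIdeal R)
    (h : ∀ Q : Ideal R, Q.IsPrime → (p : R) ∈ Q → Q = IsLocalRing.maximalIdeal R) :
    Module.Finite ℤ_[p] R := by
  have hsmul : ∀ m : ℕ, (IsLocalRing.maximalIdeal ℤ_[p] ^ m • ⊤ : Submodule ℤ_[p] R) =
      (Ideal.span {(p : R)} ^ m).restrictScalars ℤ_[p] := by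
    intro m
    rw [PadicInt.maximalIdeal_eq_span_p, Ideal.smul_top_eq_map, Ideal.map_pow, Ideal.map_span]
    simp
  have hsmul1 : (IsLocalRing.maximalIdeal ℤ_[p] • ⊤ : Submodule ℤ_[p] R) =
      (Ideal.span {(p : R)}).restrictScalars ℤ_[p] := by simpa using hsmul 1
  have : IsHausdorff (IsLocalRing.maximalIdeal ℤ_[p]) R := by
    refine ⟨fun x hx => ?_⟩
    have : x ∈ ⨅ i : ℕ, Ideal.span {(p : R)} ^ i := by
      rw [Submodule.mem_iInf]
      intro i
      have := hx i
      rwa [SModEq.zero, hsmul] at this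
    rwa [Ideal.iInf_pow_eq_bot_of_isLocalRing] at this
    exact ne_top_of_le_ne_top (IsLocalRing.maximalIdeal.isMaximal R).ne_top
      ((Ideal.span_singleton_le_iff_mem _).mpr hp)
  -- the maximal ideal is the radical of `(p)`, so some power of it lies in `(p)`
  obtain ⟨n, hn⟩ : ∃ n, IsLocalRing.maximalIdeal R ^ n ≤ Ideal.span {(p : R)} := by
    refine Ideal.exists_pow_le_of_le_radical_of_fg ?_ (IsNoetherian.noetherian _)
    rw [Ideal.radical_eq_sInf]
    refine le_sInf fun Q hQ => (h Q hQ.2 (hQ.1 (Ideal.mem_span_singleton_self _))).ge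
  have : Finite (R ⧸ IsLocalRing.maximalIdeal R) :=
    inferInstanceAs (Finite (IsLocalRing.ResidueField R))
  have := Ideal.finite_quotient_pow (IsNoetherian.noetherian (IsLocalRing.maximalIdeal R)) n
  have : Finite (R ⧸ Ideal.span {(p : R)}) :=
    Finite.of_surjective _ (Ideal.Quotient.factor_surjective hn)
  have : Finite (R ⧸ (IsLocalRing.maximalIdeal ℤ_[p] • ⊤ : Submodule ℤ_[p] R)) := by
    rw [hsmul1]
    exact this
  exact finite_of_isHausdorff p R

/-- The kernel of `ℤ_p → R / m_R` is a nonzero prime because `ℤ_p` is infinite, so it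
contains `p`. -/
theorem ZariskiPadic.natCast_mem_maximalIdeal (p : ℕ) [Fact p.Prime] (R : Type*) [CommRing R]
    [IsLocalRing R] [Finite (IsLocalRing.ResidueField R)] [Algebra ℤ_[p] R] :
    (p : R) ∈ IsLocalRing.maximalIdeal R := by
  let k := IsLocalRing.ResidueField R
  let P := RingHom.ker (algebraMap ℤ_[p] k)
  have hP : P ≠ ⊥ := fun h =>
    have := Finite.of_injective _ ((RingHom.injective_iff_ker_eq_bot _).mpr h)
    not_finite ℤ_[p]
  have hprime : P.IsPrime := RingHom.ker_isPrime _
  have hmax : P = IsLocalRing.maximalIdeal ℤ_[p] :=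
    IsLocalRing.eq_maximalIdeal (hprime.isMaximal hP)
  have : (p : ℤ_[p]) ∈ P := by
    rw [hmax, PadicInt.maximalIdeal_eq_span_p]
    exact Ideal.mem_span_singleton_self _
  rw [RingHom.mem_ker, map_natCast] at this
  rw [← IsLocalRing.residue_eq_zero_iff, map_natCast]
  exact this

/-! ### Fields of finite type over a Noetherian local ring -/

/-- If a Noetherian domain `R` embeds in a field `K` of finite type over it, then the nonzero primes
of `R` have a common nonzero element. By Zariski's lemma `K` is finite over `Frac R`, so by Artin–Tate
`Frac R` is of finite type over `R`, that is, `Frac R = R[1/f]` for some `f`; such an `f` works. -/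
theorem ZariskiPadic.exists_mem_of_finiteType_field (R K : Type*) [CommRing R] [IsDomain R]
    [IsNoetherianRing R] [Field K] [Algebra R K] [Algebra.FiniteType R K]
    (hinj : Function.Injective (algebraMap R K)) :
    ∃ f : R, f ≠ 0 ∧ ∀ Q : Ideal R, Q.IsPrime → Q ≠ ⊥ → f ∈ Q := by
  let F := FractionRing R
  let : Algebra F K := (IsFractionRing.lift (A := R) (K := F) hinj).toAlgebra
  have : IsScalarTower R F K := .of_algebraMap_eq fun x => by
    simp [RingHom.algebraMap_toAlgebra, F]
  have : Algebra.FiniteType F K := Algebra.FiniteType.of_restrictScalars_finiteType R F K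
  have : Module.Finite F K := finite_of_finite_type_of_isJacobsonRing F K
  obtain ⟨s, hs⟩ := fg_of_fg_of_fg R F K (Algebra.FiniteType.out) (Module.Finite.fg_top)
    (algebraMap F K).injective
  -- `b` is a common denominator of the algebra generators of `F`
  obtain ⟨b, hb⟩ := IsLocalization.exist_integer_multiples_of_finset (nonZeroDivisors R) s
  have key : ∀ x : F, ∃ n : ℕ, ∃ a : R, algebraMap R F a = algebraMap R F (b : R) ^ n * x := by
    intro x
    have hx : x ∈ Algebra.adjoin R (s : Set F) := hs ▸ Algebra.mem_top
    induction hx using Algebra.adjoin_induction with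
    | mem x hx =>
      obtain ⟨a, ha⟩ := hb x hx
      exact ⟨1, a, by rw [ha, pow_one, Algebra.smul_def]⟩
    | algebraMap r => exact ⟨0, r, by simp⟩
    | add x y _ _ hx hy =>
      obtain ⟨n, a, ha⟩ := hx
      obtain ⟨m, c, hc⟩ := hy
      exact ⟨n + m, b ^ m * a + b ^ n * c, by simp only [map_add, map_mul, map_pow, ha, hc]; ring⟩
    | mul x y _ _ hx hy =>
      obtain ⟨n, a, ha⟩ := hx
      obtain ⟨m, c, hc⟩ := hy
      exact ⟨n + m, a * c, by simp only [map_mul, ha, hc]; ring⟩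
  refine ⟨b, nonZeroDivisors.ne_zero b.2, fun Q hQ hQ0 => ?_⟩
  obtain ⟨q, hq, hq0⟩ := Submodule.exists_mem_ne_zero_of_ne_bot hQ0
  -- clearing denominators in `q⁻¹` exhibits a power of `b` as a multiple of `q`
  obtain ⟨n, a, ha⟩ := key (algebraMap R F q)⁻¹
  have hq0' : algebraMap R F q ≠ 0 := by simpa using hq0
  have : (b : R) ^ n = a * q := by
    apply IsFractionRing.injective R F
    rw [map_mul, ha, map_pow, mul_assoc, inv_mul_cancel₀ hq0', mul_one]
  exact hQ.mem_of_pow_mem n (this ▸ Q.mul_mem_left a hq)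

/-- A Noetherian local domain whose nonzero primes share a nonzero element has dimension at most
one. By Krull's principal ideal theorem every element of the maximal ideal lies in one of the
finitely many primes minimal over `(f)`, so prime avoidance makes the maximal ideal itself
minimal over `(f)`, and it has height at most one. -/
theorem ZariskiPadic.eq_maximalIdeal_of_isPrime (R : Type*) [CommRing R] [IsDomain R]
    [IsNoetherianRing R] [IsLocalRing R] {f : R} (hf0 : f ≠ 0)
    (hf : ∀ Q : Ideal R, Q.IsPrime → Q ≠ ⊥ → f ∈ Q) (Q : Ideal R) (hQ : Q.IsPrime)
    (hQ0 : Q ≠ ⊥) : Q = IsLocalRing.maximalIdeal R := by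
  -- two comparable nonzero primes coincide as soon as the larger one has height at most one
  have chain : ∀ P P' : Ideal R, P.IsPrime → P'.IsPrime → P ≠ ⊥ → P ≤ P' → P'.height ≤ 1 →
      P = P' := by
    intro P P' hP hP' hP0 hle hh
    by_contra hne
    have h1 : (⊥ : Ideal R).height + 1 ≤ P.height :=
      Ideal.height_add_one_le_of_lt_of_isPrime (bot_lt_iff_ne_bot.mpr hP0)
    have h2 : P.height + 1 ≤ P'.height :=
      Ideal.height_add_one_le_of_lt_of_isPrime (lt_of_le_of_ne hle hne)
    have h3 : (2 : ℕ∞) ≤ 1 := by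
      calc (2 : ℕ∞) = 0 + 1 + 1 := by norm_num
        _ ≤ (⊥ : Ideal R).height + 1 + 1 := by gcongr; exact zero_le
        _ ≤ P.height + 1 := by gcongr
        _ ≤ 1 := h2.trans hh
    exact absurd h3 (by decide)
  have hfin := (Ideal.span {f}).finite_minimalPrimes_of_isNoetherianRing R
  have hsub : (IsLocalRing.maximalIdeal R : Set R) ⊆
      ⋃ P ∈ (hfin.toFinset : Set (Ideal R)), (P : Set R) := by
    intro x hx
    by_cases hx0 : x = 0
    · obtain ⟨P, hP⟩ := Ideal.nonempty_minimalPrimes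
        (I := Ideal.span {f}) (ne_top_of_le_ne_top hQ.ne_top
          ((Ideal.span_singleton_le_iff_mem _).mpr (hf Q hQ hQ0)))
      exact Set.mem_biUnion (by simpa using hP) (by simp [hx0])
    · obtain ⟨P', hP'⟩ := Ideal.nonempty_minimalPrimes (I := Ideal.span {x})
        (by rw [Ne, Ideal.span_singleton_eq_top]; exact hx)
      have hxP' : x ∈ P' := (Ideal.span_singleton_le_iff_mem _).mp hP'.le
      have hP'p := hP'.isPrime
      have hfP' : f ∈ P' := hf P' hP'p (fun h => hx0 (by simpa [h] using hxP'))
      obtain ⟨P, hP, hle⟩ := Ideal.exists_minimalPrimes_le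
        ((Ideal.span_singleton_le_iff_mem _).mpr hfP')
      have hfP : f ∈ P := (Ideal.span_singleton_le_iff_mem _).mp hP.le
      have := chain P P' hP.isPrime hP'p (fun h => hf0 (by simpa [h] using hfP)) hle
        (Ideal.height_le_one_of_isPrincipal_of_mem_minimalPrimes _ _ hP')
      exact Set.mem_biUnion (by simpa using hP) (this ▸ hxP')
  obtain ⟨P, hP, hle⟩ := (Ideal.subset_union_prime (f := fun P : Ideal R => P) ⊥ ⊥
    (fun P hP _ _ => by
      rw [Set.Finite.mem_toFinset] at hP
      exact hP.isPrime)).mp hsub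
  rw [Set.Finite.mem_toFinset] at hP
  have hPm : P = IsLocalRing.maximalIdeal R :=
    le_antisymm (IsLocalRing.le_maximalIdeal hP.isPrime.ne_top) hle
  exact chain Q _ hQ inferInstance hQ0 (IsLocalRing.le_maximalIdeal hQ.ne_top)
    (hPm ▸ Ideal.height_le_one_of_isPrincipal_of_mem_minimalPrimes _ _ hP)

/-- A field of characteristic zero of finite type over `R` is finite over `ℚ_p`: the image of `R` is
a domain of dimension at most one in which `p` is a nonzero nonunit, hence is finite over `ℤ_p`, and
Zariski's lemma applies over `ℚ_p`. -/
theorem ZariskiPadic.finite_of_finiteType_field (p : ℕ) [Fact p.Prime] (R K : Type*) [CommRing R]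
    [IsNoetherianRing R] [IsLocalRing R] [Finite (IsLocalRing.ResidueField R)] [Algebra ℤ_[p] R]
    [Field K] [Algebra R K] [Algebra.FiniteType R K] [Algebra ℤ_[p] K] [IsScalarTower ℤ_[p] R K]
    [Algebra ℚ_[p] K] [IsScalarTower ℤ_[p] ℚ_[p] K] : Module.Finite ℚ_[p] K := by
  let q := RingHom.ker (algebraMap R K)
  have : q.IsPrime := RingHom.ker_isPrime _
  let R' := R ⧸ q
  let : Algebra R' K := (RingHom.kerLift (algebraMap R K)).toAlgebra
  have : IsScalarTower R R' K := .of_algebraMap_eq fun x => rfl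
  have : IsScalarTower ℤ_[p] R' K := .of_algebraMap_eq fun x => by
    rw [IsScalarTower.algebraMap_apply ℤ_[p] R R', ← IsScalarTower.algebraMap_apply R R' K,
      ← IsScalarTower.algebraMap_apply]
  have hinj : Function.Injective (algebraMap R' K) := RingHom.kerLift_injective _
  have : Algebra.FiniteType R' K := .of_restrictScalars_finiteType R R' K
  have : IsLocalRing R' := .of_surjective' (Ideal.Quotient.mk q) Ideal.Quotient.mk_surjective
  have : IsLocalHom (Ideal.Quotient.mk q) := .of_surjective _ Ideal.Quotient.mk_surjective
  have : Finite (IsLocalRing.ResidueField R') := by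
    refine Finite.of_surjective (IsLocalRing.ResidueField.map (Ideal.Quotient.mk q)) ?_
    exact (Function.Surjective.of_comp (g := IsLocalRing.residue R)
      (IsLocalRing.residue_surjective.comp Ideal.Quotient.mk_surjective))
  have hpK : (p : K) ≠ 0 := by
    rw [← map_natCast (algebraMap ℚ_[p] K), map_ne_zero]
    exact_mod_cast (Fact.out : p.Prime).ne_zero
  have hpR' : (p : R') ≠ 0 := fun h => hpK (by rw [← map_natCast (algebraMap R' K), h, map_zero])
  obtain ⟨f, hf0, hf⟩ := exists_mem_of_finiteType_field R' K hinj
  have : Module.Finite ℤ_[p] R' := finite_padicInt p R' (natCast_mem_maximalIdeal p R')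
    fun Q hQ hpQ => eq_maximalIdeal_of_isPrime R' hf0 hf Q hQ
      fun h => hpR' (by simpa [h] using hpQ)
  have : Algebra.FiniteType ℤ_[p] K := .trans (S := R') inferInstance inferInstance
  have : Algebra.FiniteType ℚ_[p] K := .of_restrictScalars_finiteType ℤ_[p] ℚ_[p] K
  exact finite_of_finite_type_of_isJacobsonRing ℚ_[p] K

/-! ### Testing projectivity on Artinian quotients -/

theorem ZariskiPadic.finrank_baseChange_of_isLocalHom (S B M : Type*) [CommRing S] [IsLocalRing S]
    [CommRing B] [IsLocalRing B] [Algebra S B] [IsLocalHom (algebraMap S B)] [AddCommGroup M]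
    [Module S M] [Module.Free B (B ⊗[S] M)] :
    Module.finrank B (B ⊗[S] M) =
      Module.finrank (IsLocalRing.ResidueField S) (IsLocalRing.ResidueField S ⊗[S] M) := by
  let k := IsLocalRing.ResidueField S
  let κ := IsLocalRing.ResidueField B
  rw [← Module.finrank_baseChange (R := κ) (S := B) (M' := B ⊗[S] M),
    ← Module.finrank_baseChange (R := κ) (S := k) (M' := k ⊗[S] M)]
  exact ((TensorProduct.AlgebraTensorModule.cancelBaseChange S B κ κ M).trans
    (TensorProduct.AlgebraTensorModule.cancelBaseChange S k κ κ M).symm).finrank_eq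

/-- A finite module `M` over a Noetherian local ring `(S, m)` is free if all the `M / m ^ n M` are
projective over `S / m ^ n`. A minimal surjection `S ^ r → M` becomes an isomorphism modulo every
`m ^ n`, both sides being free of the same rank, so its kernel lies in the intersection of the
`m ^ n S ^ r`, which vanishes by Krull. -/
theorem ZariskiPadic.free_of_projective_quotients (S M : Type*) [CommRing S] [IsLocalRing S]
    [IsNoetherianRing S] [AddCommGroup M] [Module S M] [Module.Finite S M]
    (h : ∀ n : ℕ, n ≠ 0 → Module.Projective (S ⧸ IsLocalRing.maximalIdeal S ^ n)
      ((S ⧸ IsLocalRing.maximalIdeal S ^ n) ⊗[S] M)) : Module.Free S M := by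
  let k := IsLocalRing.ResidueField S
  let m := IsLocalRing.maximalIdeal S
  let w := Module.finBasis k (k ⊗[S] M)
  -- `v` lifts a basis of the fibre, so it generates `M` by Nakayama
  have ⟨v, hv⟩ := (TensorProduct.mk_surjective S M k Ideal.Quotient.mk_surjective).comp_left w
  have hspan : Submodule.span S (Set.range v) = ⊤ :=
    IsLocalRing.span_eq_top_of_tmul_eq_basis _ w (congr_fun hv)
  refine .of_basis (Module.Basis.mk (v := v) ?_ hspan.ge)
  let φ := Fintype.linearCombination S v
  have hφ : Function.Surjective φ := by
    rw [← LinearMap.range_eq_top, Fintype.range_linearCombination, hspan]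
  rw [Fintype.linearIndependent_iff]
  intro x hx i
  have hx' : φ x = 0 := by simpa [φ, Fintype.linearCombination_apply] using hx
  have : x i ∈ ⨅ n : ℕ, m ^ n := by
    rw [Submodule.mem_iInf]
    intro n
    rcases eq_or_ne n 0 with rfl | hn
    · simp
    have hne : m ^ n ≠ ⊤ := ne_top_of_le_ne_top
      (IsLocalRing.maximalIdeal.isMaximal S).ne_top (Ideal.pow_le_self hn)
    have : Nontrivial (S ⧸ m ^ n) := Ideal.Quotient.nontrivial_iff.mpr hne
    have : IsLocalRing (S ⧸ m ^ n) :=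
      .of_surjective' (Ideal.Quotient.mk _) Ideal.Quotient.mk_surjective
    have : IsLocalHom (algebraMap S (S ⧸ m ^ n)) :=
      .of_surjective _ Ideal.Quotient.mk_surjective
    have := h n hn
    have : Module.Free (S ⧸ m ^ n) ((S ⧸ m ^ n) ⊗[S] M) := Module.free_of_flat_of_isLocalRing
    have hbij := OrzechProperty.bijective_of_surjective_of_finrank_le
      (φ.baseChange (S ⧸ m ^ n)) (φ.lTensor_surjective _ hφ) (by
        rw [finrank_baseChange_of_isLocalHom S (S ⧸ m ^ n) M, Module.finrank_baseChange,
          Module.finrank_fin_fun])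
    have hz : (1 : S ⧸ m ^ n) ⊗ₜ[S] x = 0 := hbij.1 (by simp [hx'])
    have := congr_arg ((LinearMap.proj i : (Fin _ → S) →ₗ[S] S).baseChange (S ⧸ m ^ n)) hz
    have := congr_arg (TensorProduct.rid S (S ⧸ m ^ n)) this
    simp only [LinearMap.baseChange_tmul, LinearMap.proj_apply, TensorProduct.rid_tmul, map_zero,
      Algebra.smul_def, mul_one] at this
    exact Ideal.Quotient.eq_zero_iff_mem.mp this
  rwa [Ideal.iInf_pow_eq_bot_of_isLocalRing _
    (IsLocalRing.maximalIdeal.isMaximal S).ne_top] at this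

/-- Removes the universe restriction on the test algebras: a finite-dimensional algebra over a
`0`-small field is isomorphic to one in the lowest universe. -/
theorem ZariskiPadic.projective_baseChange_of_points (E L V : Type*) [Field E] [Small.{0} E]
    [CommRing L] [Algebra E L] [AddCommGroup V] [Module L V]
    (H : ∀ (B : Type) [CommRing B] [Algebra E B] [FiniteDimensional E B] (f : L →+* B),
      letI : Algebra L B := f.toAlgebra
      Module.Projective B (B ⊗[L] V))
    (B : Type*) [CommRing B] [Algebra E B] [FiniteDimensional E B] [Algebra L B] :
    Module.Projective B (B ⊗[L] V) := by
  have : Small.{0} B := small_map (Module.finBasis E B).equivFun.toEquiv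
  obtain ⟨B', _, _, ⟨e⟩⟩ : ∃ (B' : Type) (_ : CommRing B') (_ : Algebra E B'),
      Nonempty (B' ≃ₐ[E] B) := ⟨Shrink.{0} B, inferInstance, inferInstance, ⟨Shrink.algEquiv E B⟩⟩
  have : FiniteDimensional E B' := Module.Finite.equiv e.symm.toLinearEquiv
  let f : L →+* B' := (e.symm : B →+* B').comp (algebraMap L B)
  let : Algebra L B' := f.toAlgebra
  let : Algebra B' B := (e : B' →+* B).toAlgebra
  have : IsScalarTower L B' B := .of_algebraMap_eq fun x => by
    simp [RingHom.algebraMap_toAlgebra, f]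
  have := H B' f
  exact .of_equiv (TensorProduct.AlgebraTensorModule.cancelBaseChange L B' B B V)

/-- Let `L` be a Noetherian algebra over a field `E` whose residue fields at maximal ideals are all
finite over `E`. Projectivity of a finite `L`-module can be tested on finite `E`-algebras: the
quotients of the local rings `L_m` by powers of the maximal ideal are such algebras. -/
theorem ZariskiPadic.projective_of_points (E L V : Type*) [Field E] [Small.{0} E]
    [CommRing L] [IsNoetherianRing L] [Algebra E L] [AddCommGroup V] [Module L V]
    [Module.Finite L V]
    (hfin : ∀ (m : Ideal L) [m.IsMaximal], Module.Finite E m.ResidueField)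
    (H : ∀ (B : Type) [CommRing B] [Algebra E B] [FiniteDimensional E B] (f : L →+* B),
      letI : Algebra L B := f.toAlgebra
      Module.Projective B (B ⊗[L] V)) :
    Module.Projective L V := by
  have := Module.finitePresentation_of_finite L V
  refine Module.projective_of_localization_maximal fun m hm => ?_
  let S := Localization.AtPrime m
  let M := LocalizedModule m.primeCompl V
  have : IsNoetherianRing S := IsLocalization.isNoetherianRing m.primeCompl S inferInstance
  suffices Module.Free S M from inferInstance
  refine free_of_projective_quotients S M fun n hn => ?_
  let I := IsLocalRing.maximalIdeal S
  have hle : I ^ n ≤ I := Ideal.pow_le_self hn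
  have : Module.Finite E m.ResidueField := hfin m
  have : Module.Finite E (S ⧸ I) := this
  -- a nilpotent thickening, by a finitely generated ideal, of the residue field
  have : Module.Finite E (S ⧸ I ^ n) := by
    refine Module.finite_of_surjective_of_ker_le_nilradical
      (Ideal.Quotient.factorₐ E hle) (Ideal.Quotient.factor_surjective hle) ?_
      (IsNoetherian.noetherian _)
    intro x hx
    obtain ⟨x, rfl⟩ := Ideal.Quotient.mk_surjective x
    have hx' : x ∈ I := Ideal.Quotient.eq_zero_iff_mem.mp hx
    exact ⟨n, by rw [← map_pow]; exact Ideal.Quotient.eq_zero_iff_mem.mpr (Ideal.pow_mem_pow hx' n)⟩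
  have := projective_baseChange_of_points E L V H (S ⧸ I ^ n)
  have e : S ⊗[L] V ≃ₗ[S] M :=
    (IsLocalizedModule.isBaseChange m.primeCompl S (LocalizedModule.mkLinearMap m.primeCompl V)).equiv
  exact .of_equiv ((TensorProduct.AlgebraTensorModule.cancelBaseChange L S (S ⧸ I ^ n)
    (S ⧸ I ^ n) V).symm.trans (e.baseChange S (S ⧸ I ^ n) (S ⊗[L] V) M))

/-! ### The projectivity criterion -/

/-- Let `R` be a commutative Noetherian local `ℤ_p`-algebra with finite residue field,
complete and separated with respect to its maximal-ideal-adic topology, let `A` be a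
finitely generated `R`-algebra, and let `L = A[1/p]`.  A finitely generated `L`-module `V`
is projective if and only if for every finite `ℚ_p`-algebra `B` and ring homomorphism
`f : L → B`, the base change `B ⊗[L] V` is a projective `B`-module. -/
theorem projective_iff_projective_on_finite_Qp_points
    (p : ℕ) [Fact p.Prime]
    (R : Type*) [CommRing R] [IsNoetherianRing R] [IsLocalRing R]
    [Finite (IsLocalRing.ResidueField R)] [Algebra ℤ_[p] R]
    [IsAdicComplete (IsLocalRing.maximalIdeal R) R]
    (A : Type*) [CommRing A] [Algebra R A] [Algebra.FiniteType R A]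
    [Algebra ℤ_[p] A] [IsScalarTower ℤ_[p] R A]
    (V : Type*) [AddCommGroup V] [Module (Localization.Away (p : A)) V]
    (hV : Module.Finite (Localization.Away (p : A)) V) :
    Module.Projective (Localization.Away (p : A)) V ↔
      ∀ (B : Type) [CommRing B] [Algebra ℚ_[p] B] [FiniteDimensional ℚ_[p] B]
        (f : Localization.Away (p : A) →+* B),
        letI : Algebra (Localization.Away (p : A)) B := f.toAlgebra
        Module.Projective B (B ⊗[Localization.Away (p : A)] V) := by
  refine ⟨fun hproj B _ _ _ f =>
    letI : Algebra (Localization.Away (p : A)) B := f.toAlgebra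
    inferInstance, fun H => ?_⟩
  let L := Localization.Away (p : A)
  -- `p` is invertible in `L`, hence so is every nonzero `p`-adic integer
  have hunit : ∀ y : nonZeroDivisors ℤ_[p], IsUnit (algebraMap ℤ_[p] L y) := by
    intro y
    rw [PadicInt.unitCoeff_spec (nonZeroDivisors.ne_zero y.2), map_mul, map_pow, map_natCast]
    refine ((Units.isUnit _).map _).mul (.pow _ ?_)
    rw [← map_natCast (algebraMap A L)]
    exact IsLocalization.Away.algebraMap_isUnit (p : A)
  let : Algebra ℚ_[p] L := (IsLocalization.lift (S := ℚ_[p]) hunit).toAlgebra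
  have : IsScalarTower ℤ_[p] ℚ_[p] L := .of_algebraMap_eq fun x =>
    (IsLocalization.lift_eq (S := ℚ_[p]) hunit x).symm
  have : IsNoetherianRing A := Algebra.FiniteType.isNoetherianRing R A
  have : IsNoetherianRing L :=
    IsLocalization.isNoetherianRing (Submonoid.powers (p : A)) L inferInstance
  have : Algebra.FiniteType A L := IsLocalization.finiteType_of_monoid_fg (.powers (p : A)) L
  have : Algebra.FiniteType R L := .trans (S := A) inferInstance inferInstance
  refine ZariskiPadic.projective_of_points ℚ_[p] L V (fun m hm => ?_) H
  have : Algebra.FiniteType L m.ResidueField :=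
    .of_surjective (Algebra.ofId L m.ResidueField) m.algebraMap_residueField_surjective
  have : Algebra.FiniteType R m.ResidueField := .trans (S := L) inferInstance inferInstance
  exact ZariskiPadic.finite_of_finiteType_field p R m.ResidueField
end
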